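/- arXiv:2103.16458 — 4 statements merged into one kernel-verified Lean document; each statement's English description precedes it below -/
import Mathlib

section
/- Let f : ℂ → ℂ be a nonconstant holomorphic (entire) function, and define h(z) = |f′(z)|²·(1 + |f(z)|²·u(|f(z)|²)²) + 1 on ℂ∖f⁻¹(0), with K the Gaussian curvature of h(z)|dz|². If p ∈ ℂ satisfies f(p) = 0, then K(z) → −4 as z → p with z ranging over ℂ∖f⁻¹(0). -/
open Complex Filter Topology Metric
open scoped ComplexOrder

/-- The function `u(t) = (t-1)/(t log t)` for `t ≠ 1`, extended by `u(1) = 1`. -/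
noncomputable def u (t : ℝ) : ℝ := if t = 1 then 1 else (t - 1) / (t * Real.log t)

/-- Wirtinger derivative `∂g` of a complex-valued function on `ℂ` (real-differentiable sense). -/
noncomputable def wdz (g : ℂ → ℂ) (z : ℂ) : ℂ :=
  (fderiv ℝ g z 1 - Complex.I * fderiv ℝ g z Complex.I) / 2

/-- Wirtinger derivative `∂̄g` of a complex-valued function on `ℂ`. -/
noncomputable def wdzbar (g : ℂ → ℂ) (z : ℂ) : ℂ :=
  (fderiv ℝ g z 1 + Complex.I * fderiv ℝ g z Complex.I) / 2

/-- `∂h` for a real-valued `h`. -/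
noncomputable def wdzR (h : ℂ → ℝ) : ℂ → ℂ := wdz fun w => (h w : ℂ)

/-- `∂̄h` for a real-valued `h`. -/
noncomputable def wdzbarR (h : ℂ → ℝ) : ℂ → ℂ := wdzbar fun w => (h w : ℂ)

/-- `∂∂̄h` for a real-valued `h`. -/
noncomputable def wlapR (h : ℂ → ℝ) : ℂ → ℂ := wdz (wdzbarR h)

/-- The numerator `h·∂∂̄h − ∂h·∂̄h` of (−1/2 times) the Gaussian curvature of `h|dz|²`. -/
noncomputable def curvNum (h : ℂ → ℝ) (z : ℂ) : ℂ :=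
  (h z : ℂ) * wlapR h z - wdzR h z * wdzbarR h z

/-- The Gaussian curvature `K = −2(h·∂∂̄h − ∂h·∂̄h)/h³` of the conformal metric `h|dz|²`. -/
noncomputable def gaussCurv (h : ℂ → ℝ) (z : ℂ) : ℂ :=
  -2 * curvNum h z / (h z : ℂ) ^ 3

/-!
In the local coordinate `ζ = log f` the singular part `|f'|²(1 + |f|²u(|f|²)²)|dz|²` of the metric
becomes `Ψ(2 Re ζ)|dζ|²` with `Ψ(x) = eˣ + (eˣ - 1)²/x²`. As `z → p` we have `x = log |f|² → -∞`,
and there `Ψ(x) ~ 1/x²` together with its first two derivatives: this is the cusp metric, of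
curvature `-4`. The remaining flat part is `|q|²|dζ|²` with `q = f/f'`. Since `q` is holomorphic and
vanishes at `p`, some power of `q` is `O(f)`, so `|q|²` decays faster than any power of the
logarithm `x` and does not contribute to the limit.
-/

open scoped ComplexConjugate

/-- The real-linear map `A dz + B dz̄`. -/
noncomputable def wirtingerDifferential (A B : ℂ) : ℂ →L[ℝ] ℂ :=
  A • ContinuousLinearMap.id ℝ ℂ + B • (conjCLE : ℂ →L[ℝ] ℂ)

lemma wirtingerDifferential_apply (A B v : ℂ) :
    wirtingerDifferential A B v = A * v + B * conj v := by
  simp [wirtingerDifferential]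

/-- `g` is real-differentiable at `z` with Wirtinger derivatives `∂g(z) = A` and `∂̄g(z) = B`. -/
def HasWirtingerDerivAt (g : ℂ → ℂ) (A B z : ℂ) : Prop :=
  HasFDerivAt g (wirtingerDifferential A B) z

namespace HasWirtingerDerivAt

variable {f g : ℂ → ℂ} {A B C D z : ℂ}

lemma wdz_eq (hg : HasWirtingerDerivAt g A B z) : wdz g z = A := by
  rw [wdz, HasFDerivAt.fderiv hg]
  simp only [wirtingerDifferential_apply, map_one, conj_I]
  linear_combination (-A / 2 + B / 2) * I_sq

lemma wdzbar_eq (hg : HasWirtingerDerivAt g A B z) : wdzbar g z = B := by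
  rw [wdzbar, HasFDerivAt.fderiv hg]
  simp only [wirtingerDifferential_apply, map_one, conj_I]
  linear_combination (A / 2 - B / 2) * I_sq

lemma congr_of_eventuallyEq (hg : HasWirtingerDerivAt g A B z) (hfg : f =ᶠ[𝓝 z] g) :
    HasWirtingerDerivAt f A B z :=
  HasFDerivAt.congr_of_eventuallyEq hg hfg

lemma of_hasDerivAt (hg : HasDerivAt g A z) : HasWirtingerDerivAt g A 0 z := by
  refine (hg.hasFDerivAt.restrictScalars ℝ).congr_fderiv ?_
  ext v; simp [wirtingerDifferential_apply, mul_comm]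

lemma add (hf : HasWirtingerDerivAt f A B z) (hg : HasWirtingerDerivAt g C D z) :
    HasWirtingerDerivAt (fun w => f w + g w) (A + C) (B + D) z := by
  refine (HasFDerivAt.add hf hg).congr_fderiv ?_
  ext v; simp only [add_apply, wirtingerDifferential_apply]; ring

lemma mul (hf : HasWirtingerDerivAt f A B z) (hg : HasWirtingerDerivAt g C D z) :
    HasWirtingerDerivAt (fun w => f w * g w) (A * g z + f z * C) (B * g z + f z * D) z := by
  refine (HasFDerivAt.mul hf hg).congr_fderiv ?_
  ext v; simp only [add_apply, smul_apply, smul_eq_mul, wirtingerDifferential_apply]; ring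

lemma conj_comp (hg : HasWirtingerDerivAt g A B z) :
    HasWirtingerDerivAt (fun w => conj (g w)) (conj B) (conj A) z := by
  refine ((conjCLE : ℂ →L[ℝ] ℂ).hasFDerivAt.comp z hg).congr_fderiv ?_
  ext v; simp [wirtingerDifferential_apply, add_comm]

lemma ofReal_comp {φ : ℝ → ℝ} {x : ℂ → ℝ} {d : ℝ}
    (hx : HasWirtingerDerivAt (fun w => (x w : ℂ)) A B z) (hφ : HasDerivAt φ d (x z)) :
    HasWirtingerDerivAt (fun w => (φ (x w) : ℂ)) (d * A) (d * B) z := by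
  have hx_re := reCLM.hasFDerivAt.comp z hx
  have dx_real := (ofRealCLM.hasFDerivAt.comp z hx_re).unique hx
  refine (ofRealCLM.hasFDerivAt.comp z (hφ.comp_hasFDerivAt z hx_re)).congr_fderiv ?_
  rw [ContinuousLinearMap.comp_smul, dx_real]
  ext v; simp only [smul_apply, real_smul, wirtingerDifferential_apply]; ring

lemma norm_sq (hg : HasDerivAt g A z) :
    HasWirtingerDerivAt (fun w => ((‖g w‖ ^ 2 : ℝ) : ℂ)) (A * conj (g z)) (g z * conj A) z := by
  simpa [mul_conj, normSq_eq_norm_sq] using (of_hasDerivAt hg).mul (of_hasDerivAt hg).conj_comp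

lemma log_norm_sq (hf : DifferentiableAt ℂ f z) (hfz : f z ≠ 0) :
    HasWirtingerDerivAt (fun w => (Real.log (‖f w‖ ^ 2) : ℂ))
      (logDeriv f z) (conj (logDeriv f z)) z := by
  have ht : ‖f z‖ ^ 2 ≠ 0 := by simpa using hfz
  convert (norm_sq hf.hasDerivAt).ofReal_comp (Real.hasDerivAt_log ht) using 1
  · push_cast
    rw [logDeriv_apply, ← mul_conj']
    have : conj (f z) ≠ 0 := by simpa using hfz
    field_simp
  · push_cast
    rw [logDeriv_apply, ← mul_conj', map_div₀]
    have : conj (f z) ≠ 0 := by simpa using hfz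
    field_simp

end HasWirtingerDerivAt

lemma gaussCurv_congr {h k : ℂ → ℝ} {z : ℂ} (hhk : h =ᶠ[𝓝 z] k) :
    gaussCurv h z = gaussCurv k z := by
  have hhk' : (fun w => (h w : ℂ)) =ᶠ[𝓝 z] fun w => (k w : ℂ) := hhk.fun_comp ofReal
  have hbar : wdzbarR h =ᶠ[𝓝 z] wdzbarR k := by
    filter_upwards [hhk'.fderiv (𝕜 := ℝ)] with w hw
    simp only [wdzbarR, wdzbar, hw]
  simp only [gaussCurv, curvNum, wlapR, wdzR, wdz, hbar.eq_of_nhds, hbar.fderiv_eq, hhk'.fderiv_eq,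
    hhk.eq_of_nhds]

lemma curvNum_add_const (h : ℂ → ℝ) (c : ℝ) (z : ℂ) :
    curvNum (fun w => h w + c) z = curvNum h z + c * wlapR h z := by
  have hdz : wdzR (fun w => h w + c) = wdzR h := by
    ext w; simp only [wdzR, wdz, ofReal_add, fderiv_add_const]
  have hdzbar : wdzbarR (fun w => h w + c) = wdzbarR h := by
    ext w; simp only [wdzbarR, wdzbar, ofReal_add, fderiv_add_const]
  simp only [curvNum, wlapR, hdz, hdzbar, ofReal_add]
  ring

section RePullback

/-- The conformal factor of the pullback of the metric `Ψ(2 Re ζ)|dζ|²` under a holomorphic map `ζ`,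
given through the derivative `G = ζ'` and `x = 2 Re ζ`, so that `ζ` itself may be multivalued. -/
noncomputable def rePullback (Ψ : ℝ → ℝ) (G : ℂ → ℂ) (x : ℂ → ℝ) (z : ℂ) : ℝ :=
  ‖G z‖ ^ 2 * Ψ (x z)

variable {Ψ : ℝ → ℝ} {G : ℂ → ℂ} {x : ℂ → ℝ} {z : ℂ}

lemma hasWirtingerDerivAt_rePullback (hG : DifferentiableAt ℂ G z)
    (hx : HasWirtingerDerivAt (fun w => (x w : ℂ)) (G z) (conj (G z)) z)
    (hΨ : DifferentiableAt ℝ Ψ (x z)) :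
    HasWirtingerDerivAt (fun w => (rePullback Ψ G x w : ℂ))
      (conj (G z) * (deriv G z * Ψ (x z) + G z ^ 2 * deriv Ψ (x z)))
      (G z * (conj (deriv G z) * Ψ (x z) + conj (G z) ^ 2 * deriv Ψ (x z))) z := by
  have h := (HasWirtingerDerivAt.norm_sq hG.hasDerivAt).mul (hx.ofReal_comp hΨ.hasDerivAt)
  simp only [← ofReal_mul] at h
  unfold rePullback
  convert h using 1 <;> rw [ofReal_pow, ← mul_conj'] <;> ring

lemma wlapR_rePullback (hG : AnalyticAt ℂ G z)
    (hx : ∀ᶠ w in 𝓝 z, HasWirtingerDerivAt (fun w => (x w : ℂ)) (G w) (conj (G w)) w)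
    (hΨ : ContDiffAt ℝ 2 Ψ (x z)) :
    wlapR (rePullback Ψ G x) z =
      ‖deriv G z‖ ^ 2 * Ψ (x z)
        + (deriv G z * conj (G z) ^ 2 + conj (deriv G z) * G z ^ 2) * deriv Ψ (x z)
        + ‖G z‖ ^ 4 * deriv (deriv Ψ) (x z) := by
  have hxz := hx.self_of_nhds
  have hx_cont : ContinuousAt x z := continuous_re.continuousAt.comp (HasFDerivAt.continuousAt hxz)
  have hdzbar : wdzbarR (rePullback Ψ G x) =ᶠ[𝓝 z] fun w =>
      G w * (conj (deriv G w) * Ψ (x w) + conj (G w) * conj (G w) * deriv Ψ (x w)) := by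
    filter_upwards [hG.eventually_analyticAt, hx, hx_cont.eventually (hΨ.eventually (by simp))]
      with w hGw hxw hΨw
    rw [wdzbarR, (hasWirtingerDerivAt_rePullback hGw.differentiableAt hxw
      (hΨw.differentiableAt two_ne_zero)).wdzbar_eq, sq]
  have hdG := HasWirtingerDerivAt.of_hasDerivAt hG.differentiableAt.hasDerivAt
  have hddG := HasWirtingerDerivAt.of_hasDerivAt hG.deriv.differentiableAt.hasDerivAt
  have hdΨ := hxz.ofReal_comp (hΨ.differentiableAt two_ne_zero).hasDerivAt
  have hddΨ := hxz.ofReal_comp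
    ((hΨ.derivWithin (m := 1) (by norm_num)).differentiableAt one_ne_zero).hasDerivAt
  have h := (hdG.mul ((hddG.conj_comp.mul hdΨ).add
    ((hdG.conj_comp.mul hdG.conj_comp).mul hddΨ))).congr_of_eventuallyEq hdzbar
  have hG4 : (‖G z‖ : ℂ) ^ 4 = (G z * conj (G z)) ^ 2 := by rw [mul_conj']; ring
  rw [wlapR, h.wdz_eq, hG4, ← mul_conj', map_zero]
  ring

lemma curvNum_rePullback (hG : AnalyticAt ℂ G z)
    (hx : ∀ᶠ w in 𝓝 z, HasWirtingerDerivAt (fun w => (x w : ℂ)) (G w) (conj (G w)) w)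
    (hΨ : ContDiffAt ℝ 2 Ψ (x z)) :
    curvNum (rePullback Ψ G x) z =
      ‖G z‖ ^ 6 * (Ψ (x z) * deriv (deriv Ψ) (x z) - deriv Ψ (x z) ^ 2) := by
  have h := hasWirtingerDerivAt_rePullback hG.differentiableAt hx.self_of_nhds
    (hΨ.differentiableAt two_ne_zero)
  have hG4 : (‖G z‖ : ℂ) ^ 4 = (G z * conj (G z)) ^ 2 := by rw [mul_conj']; ring
  have hG6 : (‖G z‖ : ℂ) ^ 6 = (G z * conj (G z)) ^ 3 := by rw [mul_conj']; ring
  rw [curvNum, wlapR_rePullback hG hx hΨ, wdzR, wdzbarR, h.wdz_eq, h.wdzbar_eq, rePullback,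
    ofReal_mul, ofReal_pow, hG4, hG6, ← mul_conj', ← mul_conj']
  ring

-- With `q = 1/G`, dividing the numerator and `h³` by `|G|⁶` leaves only `|q|²`, `q'` and `Ψ`.
lemma gaussCurv_rePullback_add_const (hG : AnalyticAt ℂ G z) (hGz : G z ≠ 0)
    (hx : ∀ᶠ w in 𝓝 z, HasWirtingerDerivAt (fun w => (x w : ℂ)) (G w) (conj (G w)) w)
    (hΨ : ContDiffAt ℝ 2 Ψ (x z)) (c : ℝ) :
    gaussCurv (fun w => rePullback Ψ G x w + c) z =
      ((-2 * (Ψ (x z) * deriv (deriv Ψ) (x z) - deriv Ψ (x z) ^ 2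
          + c * ‖G⁻¹ z‖ ^ 2 * (‖deriv G⁻¹ z‖ ^ 2 * Ψ (x z) - 2 * (deriv G⁻¹ z).re * deriv Ψ (x z)
            + deriv (deriv Ψ) (x z)))
        / (Ψ (x z) + c * ‖G⁻¹ z‖ ^ 2) ^ 3 : ℝ) : ℂ) := by
  have hcGz : conj (G z) ≠ 0 := by simpa using hGz
  have hnorm : (‖G z‖ : ℂ) ^ 6 ≠ 0 := by simpa using hGz
  have hG4 : (‖G z‖ : ℂ) ^ 4 = (G z * conj (G z)) ^ 2 := by rw [mul_conj']; ring
  have hG6 : (‖G z‖ : ℂ) ^ 6 = (G z * conj (G z)) ^ 3 := by rw [mul_conj']; ring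
  have hre : 2 * ((deriv G⁻¹ z).re : ℂ) = deriv G⁻¹ z + conj (deriv G⁻¹ z) := by
    rw [add_conj]; push_cast; rfl
  have hdq : deriv G⁻¹ z = -deriv G z / G z ^ 2 := deriv_inv'' hG.differentiableAt hGz
  rw [gaussCurv, curvNum_add_const, curvNum_rePullback hG hx hΨ, wlapR_rePullback hG hx hΨ,
    rePullback]
  push_cast
  rw [hre]
  refine Eq.trans ?_ (mul_div_mul_left _ _ hnorm)
  congr 1
  · rw [hG6, hG4, ← mul_conj', ← mul_conj', ← mul_conj', hdq, Pi.inv_apply]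
    simp only [map_div₀, map_neg, map_pow, map_inv₀]
    field_simp
    ring
  · rw [hG6, ← mul_conj', ← mul_conj', Pi.inv_apply, map_inv₀]
    field_simp

end RePullback

section AnalyticZero

variable {𝕜 : Type*} [NontriviallyNormedField 𝕜] {f q : 𝕜 → 𝕜} {p : 𝕜}

lemma exists_pow_isBigO_of_zero (hq : DifferentiableAt 𝕜 q p) (hqp : q p = 0)
    (hf : AnalyticAt 𝕜 f p) (hfp : f p = 0) (hne : ¬ ∀ᶠ z in 𝓝 p, f z = 0) :
    ∃ m ≠ 0, (q ^ m) =O[𝓝 p] f := by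
  obtain ⟨m, g, hg, hgp, hfg⟩ := hf.exists_eventuallyEq_pow_smul_nonzero_iff.mpr hne
  have hm : m ≠ 0 := by
    rintro rfl
    exact hgp (by simpa [hfp] using hfg.self_of_nhds.symm)
  have hqO : q =O[𝓝 p] fun z => z - p := by simpa [hqp] using hq.isBigO_sub
  have hgO : (fun _ => (1 : 𝕜)) =O[𝓝 p] g := (Asymptotics.isBigO_const_const 1 hgp _).trans
    ((Asymptotics.isEquivalent_const_iff_tendsto hgp).mpr hg.continuousAt).isBigO_symm
  refine ⟨m, hm, ((hqO.pow m).mul hgO).congr' (by simp [Pi.pow_def]) ?_⟩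
  filter_upwards [hfg] with z hz using by simpa using hz.symm

variable [CompleteSpace 𝕜] [CharZero 𝕜]

lemma meromorphicOrderAt_logDeriv_of_zero (hf : AnalyticAt 𝕜 f p) (hfp : f p = 0)
    (hne : ¬ ∀ᶠ z in 𝓝 p, f z = 0) : meromorphicOrderAt (logDeriv f) p = -1 := by
  refine meromorphicOrderAt_logDeriv_eq_neg_one hf.meromorphicAt ?_ ?_
  · simpa [hf.meromorphicOrderAt_eq, analyticOrderAt_eq_zero, hf] using hfp
  · simpa [hf.meromorphicOrderAt_eq, analyticOrderAt_eq_top] using hne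

lemma eventually_logDeriv_ne_zero (hf : AnalyticAt 𝕜 f p) (hfp : f p = 0)
    (hne : ¬ ∀ᶠ z in 𝓝 p, f z = 0) : ∀ᶠ z in 𝓝[≠] p, logDeriv f z ≠ 0 := by
  have horder := meromorphicOrderAt_logDeriv_of_zero hf hfp hne
  refine (meromorphicOrderAt_ne_top_iff_eventually_ne_zero
    (meromorphicAt_of_meromorphicOrderAt_ne_zero ?_)).mp ?_ <;> simp [horder]

lemma analyticAt_inv_logDeriv_of_zero (hf : AnalyticAt 𝕜 f p) (hfp : f p = 0)
    (hne : ¬ ∀ᶠ z in 𝓝 p, f z = 0) : AnalyticAt 𝕜 (logDeriv f)⁻¹ p := by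
  refine AnalyticAt.of_meromorphicOrderAt_pos ?_ (by simp [logDeriv_apply, hfp])
  simp [meromorphicOrderAt_inv, meromorphicOrderAt_logDeriv_of_zero hf hfp hne]

end AnalyticZero

lemma tendsto_pow_mul_exp_atBot (k : ℕ) :
    Tendsto (fun x : ℝ => x ^ k * Real.exp x) atBot (𝓝 0) := by
  have h := ((Real.tendsto_pow_mul_exp_neg_atTop_nhds_zero k).comp
    tendsto_neg_atBot_atTop).const_mul ((-1) ^ k)
  simpa [Function.comp_def, ← mul_assoc, ← mul_pow] using h

lemma tendsto_mul_pow_of_pow_isBigO_exp {α : Type*} {l : Filter α} {r x : α → ℝ} {m : ℕ}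
    (hm : m ≠ 0) (hx : Tendsto x l atBot) (hr : (r ^ m) =O[l] fun a => Real.exp (x a)) (k : ℕ) :
    Tendsto (fun a => r a * x a ^ k) l (𝓝 0) := by
  have hpow : (fun a => (r a * x a ^ k) ^ m) =O[l] fun a => x a ^ (k * m) * Real.exp (x a) := by
    refine (hr.mul (Asymptotics.isBigO_refl (fun a => x a ^ (k * m)) l)).congr ?_ ?_ <;>
      intro a
    · simp only [Pi.pow_apply]; ring
    · ring
  have hzero := hpow.trans_tendsto ((tendsto_pow_mul_exp_atBot (k * m)).comp hx)
  refine (Asymptotics.isLittleO_one_iff ℝ).mp (Asymptotics.IsLittleO.of_pow (n := m) ?_ hm)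
  simpa [Pi.pow_def] using hzero

/-- The metric `Ψ(2 Re ζ)|dζ|²` is asymptotic, together with its derivatives up to order two, to the
cusp metric `|dζ|² / (2 Re ζ)²` of curvature `-4` as `Re ζ → -∞`. -/
structure IsCuspProfile (Ψ : ℝ → ℝ) : Prop where
  eventually_contDiffAt : ∀ᶠ x in atBot, ContDiffAt ℝ 2 Ψ x
  tendsto_sq_mul : Tendsto (fun x => x ^ 2 * Ψ x) atBot (𝓝 1)
  tendsto_cube_mul_deriv : Tendsto (fun x => x ^ 3 * deriv Ψ x) atBot (𝓝 (-2))
  tendsto_pow_four_mul_deriv_deriv : Tendsto (fun x => x ^ 4 * deriv (deriv Ψ) x) atBot (𝓝 6)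

namespace IsCuspProfile

variable {Ψ : ℝ → ℝ}

lemma tendsto_curvature {α : Type*} {l : Filter α} {x r a b : α → ℝ} {A B : ℝ}
    (hΨ : IsCuspProfile Ψ) (hx : Tendsto x l atBot)
    (hr : ∀ k, Tendsto (fun i => r i * x i ^ k) l (𝓝 0))
    (ha : Tendsto a l (𝓝 A)) (hb : Tendsto b l (𝓝 B)) (c : ℝ) :
    Tendsto (fun i => -2 * (Ψ (x i) * deriv (deriv Ψ) (x i) - deriv Ψ (x i) ^ 2
        + c * r i * (a i * Ψ (x i) - 2 * b i * deriv Ψ (x i) + deriv (deriv Ψ) (x i)))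
      / (Ψ (x i) + c * r i) ^ 3) l (𝓝 (-4)) := by
  have h₀ := hΨ.tendsto_sq_mul.comp hx
  have h₁ := hΨ.tendsto_cube_mul_deriv.comp hx
  have h₂ := hΨ.tendsto_pow_four_mul_deriv_deriv.comp hx
  have hnum := (((h₀.mul h₂).sub (h₁.pow 2)).add
    (((((hr 4).mul ha).mul h₀).sub ((((hr 3).mul hb).mul h₁).const_mul 2)).add
      ((hr 2).mul h₂) |>.const_mul c)).const_mul (-2)
  have hden := (h₀.add ((hr 2).const_mul c)).pow 3
  have hlim := hnum.div hden (by norm_num)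
  rw [show (-4 : ℝ) = -2 * (1 * 6 - (-2) ^ 2 + c * (0 * A * 1 - 2 * (0 * B * -2) + 0 * 6))
    / (1 + c * 0) ^ 3 by norm_num]
  refine hlim.congr' ?_
  filter_upwards [hx.eventually_ne_atBot 0] with i hxi
  refine Eq.trans ?_ (mul_div_mul_left _ _ (pow_ne_zero 6 hxi))
  simp only [Pi.div_apply, Function.comp_apply]
  congr 1 <;> ring

end IsCuspProfile

lemma tendsto_log_norm_sq_atBot {X E : Type*} [TopologicalSpace X] [NormedAddCommGroup E]
    {f : X → E} {p : X} (hf : ContinuousAt f p) (hfp : f p = 0) :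
    Tendsto (fun z => Real.log (‖f z‖ ^ 2)) (𝓝[(f ⁻¹' {0})ᶜ] p) atBot := by
  refine Real.tendsto_log_nhdsGT_zero.comp (tendsto_nhdsWithin_iff.mpr ⟨?_, ?_⟩)
  · have h : Tendsto (fun z => ‖f z‖ ^ 2) (𝓝 p) (𝓝 0) := by simpa [hfp] using hf.tendsto.norm.pow 2
    exact h.mono_left nhdsWithin_le_nhds
  · filter_upwards [self_mem_nhdsWithin] with z hz
    have : f z ≠ 0 := hz
    exact Set.mem_Ioi.mpr (by positivity)

lemma tendsto_norm_sq_mul_log_norm_sq_pow {𝕜 : Type*} [NontriviallyNormedField 𝕜] {f q : 𝕜 → 𝕜}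
    {p : 𝕜} (hq : DifferentiableAt 𝕜 q p) (hqp : q p = 0) (hf : AnalyticAt 𝕜 f p) (hfp : f p = 0)
    (hne : ¬ ∀ᶠ z in 𝓝 p, f z = 0) (k : ℕ) :
    Tendsto (fun z => ‖q z‖ ^ 2 * Real.log (‖f z‖ ^ 2) ^ k) (𝓝[(f ⁻¹' {0})ᶜ] p) (𝓝 0) := by
  obtain ⟨m, hm, hqf⟩ := exists_pow_isBigO_of_zero hq hqp hf hfp hne
  refine tendsto_mul_pow_of_pow_isBigO_exp hm
    (tendsto_log_norm_sq_atBot hf.continuousAt hfp) ?_ k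
  refine ((hqf.mono nhdsWithin_le_nhds).norm_norm.pow 2).congr' (.of_forall fun z => ?_) ?_
  · simp only [Pi.pow_apply, norm_pow]; ring
  · filter_upwards [self_mem_nhdsWithin] with z hz
    have hfz : f z ≠ 0 := hz
    exact (Real.exp_log (by positivity)).symm

lemma IsCuspProfile.tendsto_gaussCurv_add_const {Ψ : ℝ → ℝ} {f : ℂ → ℂ} {p : ℂ}
    (hΨ : IsCuspProfile Ψ) (hf : AnalyticAt ℂ f p) (hfp : f p = 0)
    (hne : ¬ ∀ᶠ z in 𝓝 p, f z = 0) (c : ℝ) :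
    Tendsto
      (gaussCurv fun z => rePullback Ψ (logDeriv f) (fun w => Real.log (‖f w‖ ^ 2)) z + c)
      (𝓝[(f ⁻¹' {0})ᶜ] p) (𝓝 (-4)) := by
  have hq : AnalyticAt ℂ (logDeriv f)⁻¹ p := analyticAt_inv_logDeriv_of_zero hf hfp hne
  have hqp : (logDeriv f)⁻¹ p = 0 := by simp [logDeriv_apply, hfp]
  have hx := tendsto_log_norm_sq_atBot hf.continuousAt hfp
  have hdq : Tendsto (deriv (logDeriv f)⁻¹) (𝓝[(f ⁻¹' {0})ᶜ] p) (𝓝 (deriv (logDeriv f)⁻¹ p)) :=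
    hq.deriv.continuousAt.tendsto.mono_left nhdsWithin_le_nhds
  have hcurv := hΨ.tendsto_curvature hx
    (tendsto_norm_sq_mul_log_norm_sq_pow hq.differentiableAt hqp hf hfp hne)
    (hdq.norm.pow 2) ((continuous_re.tendsto _).comp hdq) c
  have hpunctured : 𝓝[(f ⁻¹' {0})ᶜ] p ≤ 𝓝[≠] p :=
    nhdsWithin_mono _ (by rintro z hz rfl; exact hz hfp)
  rw [show (-4 : ℂ) = ((-4 : ℝ) : ℂ) by norm_num]
  refine ((continuous_ofReal.tendsto _).comp hcurv).congr' ?_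
  filter_upwards [self_mem_nhdsWithin, hf.eventually_analyticAt.filter_mono nhdsWithin_le_nhds,
    (eventually_logDeriv_ne_zero hf hfp hne).filter_mono hpunctured,
    hx.eventually hΨ.eventually_contDiffAt] with z hfz hfa hGz hΨz
  have hG : AnalyticAt ℂ (logDeriv f) z := hfa.deriv.div hfa hfz
  refine (gaussCurv_rePullback_add_const (x := fun w => Real.log (‖f w‖ ^ 2)) hG hGz ?_ hΨz c).symm
  filter_upwards [hfa.eventually_analyticAt, hfa.continuousAt.eventually_ne hfz] with w hfaw hfw
    using .log_norm_sq hfaw.differentiableAt hfw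

/-- The profile of the metric `|f'|²(1 + |f|²u(|f|²)²)|dz|²` in the coordinate `ζ = log f`, where
`|f|² = exp(2 Re ζ)`. -/
noncomputable def uProfile (x : ℝ) : ℝ :=
  Real.exp x + (Real.exp x - 1) ^ 2 / x ^ 2

lemma hasDerivAt_uProfile {x : ℝ} (hx : x ≠ 0) :
    HasDerivAt uProfile (Real.exp x + 2 * (Real.exp x - 1) * Real.exp x / x ^ 2
      - 2 * (Real.exp x - 1) ^ 2 / x ^ 3) x := by
  have he := Real.hasDerivAt_exp x
  have h := he.add (((he.sub_const 1).pow 2).div (hasDerivAt_pow 2 x) (pow_ne_zero 2 hx))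
  refine h.congr_deriv ?_
  simp only [Nat.cast_ofNat, Nat.add_one_sub_one, pow_one, Pi.pow_apply]
  field_simp
  ring

lemma hasDerivAt_deriv_uProfile {x : ℝ} (hx : x ≠ 0) :
    HasDerivAt (deriv uProfile) (Real.exp x
      + 2 * (2 * Real.exp x - 1) * Real.exp x / x ^ 2
      - 8 * (Real.exp x - 1) * Real.exp x / x ^ 3 + 6 * (Real.exp x - 1) ^ 2 / x ^ 4) x := by
  have he := Real.hasDerivAt_exp x
  have h := (he.add ((((he.sub_const 1).const_mul 2).mul he).div (hasDerivAt_pow 2 x)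
    (pow_ne_zero 2 hx))).sub ((((he.sub_const 1).pow 2).const_mul 2).div (hasDerivAt_pow 3 x)
    (pow_ne_zero 3 hx))
  have hderiv := (eventually_ne_nhds hx).mono fun y hy => (hasDerivAt_uProfile hy).deriv
  refine (h.congr_of_eventuallyEq hderiv).congr_deriv ?_
  simp only [Pi.mul_apply, Nat.cast_ofNat, Nat.add_one_sub_one, pow_one, Pi.pow_apply]
  field_simp
  ring

lemma contDiffAt_uProfile {x : ℝ} (hx : x ≠ 0) {n : WithTop ℕ∞} : ContDiffAt ℝ n uProfile x :=
  Real.contDiff_exp.contDiffAt.add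
    (((Real.contDiff_exp.contDiffAt.sub contDiffAt_const).pow 2).div (contDiffAt_id.pow 2)
      (pow_ne_zero 2 hx))

lemma isCuspProfile_uProfile : IsCuspProfile uProfile := by
  have hexp := Real.tendsto_exp_atBot
  have hne := eventually_ne_atBot (0 : ℝ)
  have hsq : Tendsto (fun x => (Real.exp x - 1) ^ 2) atBot (𝓝 1) := by
    simpa using (hexp.sub_const 1).pow 2
  refine ⟨hne.mono fun x hx => contDiffAt_uProfile hx, ?_, ?_, ?_⟩
  · have h : Tendsto (fun x => x ^ 2 * Real.exp x + (Real.exp x - 1) ^ 2) atBot (𝓝 1) := by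
      simpa using (tendsto_pow_mul_exp_atBot 2).add hsq
    refine h.congr' (hne.mono fun x hx => ?_)
    simp only [uProfile]
    field_simp
  · have h : Tendsto (fun x => x ^ 3 * Real.exp x + 2 * (Real.exp x - 1) * (x * Real.exp x)
        - 2 * (Real.exp x - 1) ^ 2) atBot (𝓝 (-2)) := by
      simpa using ((tendsto_pow_mul_exp_atBot 3).add (((hexp.sub_const 1).const_mul 2).mul
        (tendsto_pow_mul_exp_atBot 1))).sub (hsq.const_mul 2)
    refine h.congr' (hne.mono fun x hx => ?_)
    simp only [(hasDerivAt_uProfile hx).deriv]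
    field_simp
  · have h : Tendsto (fun x => x ^ 4 * Real.exp x
        + 2 * (2 * Real.exp x - 1) * (x ^ 2 * Real.exp x)
        - 8 * (Real.exp x - 1) * (x * Real.exp x) + 6 * (Real.exp x - 1) ^ 2) atBot (𝓝 6) := by
      simpa using (((tendsto_pow_mul_exp_atBot 4).add
        ((((hexp.const_mul 2).sub_const 1).const_mul 2).mul (tendsto_pow_mul_exp_atBot 2))).sub
        (((hexp.sub_const 1).const_mul 8).mul (tendsto_pow_mul_exp_atBot 1))).add (hsq.const_mul 6)
    refine h.congr' (hne.mono fun x hx => ?_)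
    simp only [(hasDerivAt_deriv_uProfile hx).deriv]
    field_simp

lemma norm_deriv_sq_mul_eq_rePullback {f : ℂ → ℂ} {z : ℂ} (hfz : f z ≠ 0) (hfz' : ‖f z‖ ≠ 1) :
    ‖deriv f z‖ ^ 2 * (1 + ‖f z‖ ^ 2 * u (‖f z‖ ^ 2) ^ 2) =
      rePullback uProfile (logDeriv f) (fun w => Real.log (‖f w‖ ^ 2)) z := by
  have ht : 0 < ‖f z‖ ^ 2 := by positivity
  have ht' : ‖f z‖ ^ 2 ≠ 1 := (pow_eq_one_iff_of_nonneg (norm_nonneg _) two_ne_zero).not.mpr hfz'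
  have hlog : Real.log (‖f z‖ ^ 2) ≠ 0 := Real.log_ne_zero_of_pos_of_ne_one ht ht'
  rw [rePullback, uProfile, Real.exp_log ht, u, if_neg ht', logDeriv_apply, norm_div, div_pow]
  field_simp

theorem stmt8_general (f : ℂ → ℂ) (p : ℂ) (hf : AnalyticAt ℂ f p) (hfp : f p = 0)
    (hne : ¬ ∀ᶠ z in 𝓝 p, f z = 0) :
    Tendsto (gaussCurv (fun z =>
        ‖deriv f z‖ ^ 2 * (1 + ‖f z‖ ^ 2 * u (‖f z‖ ^ 2) ^ 2) + 1))
      (𝓝[(f ⁻¹' {0})ᶜ] p) (𝓝 (-4)) := by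
  refine (isCuspProfile_uProfile.tendsto_gaussCurv_add_const hf hfp hne 1).congr' ?_
  have hsmall : ∀ᶠ z in 𝓝 p, ‖f z‖ ≠ 1 := hf.continuousAt.norm.eventually_ne (by simp [hfp])
  filter_upwards [self_mem_nhdsWithin, hf.eventually_analyticAt.filter_mono nhdsWithin_le_nhds,
    hsmall.eventually_nhds.filter_mono nhdsWithin_le_nhds] with z hfz hfa hfz'
  refine gaussCurv_congr ?_
  filter_upwards [hfa.continuousAt.eventually_ne hfz, hfz'] with w hfw hfw'
  rw [norm_deriv_sq_mul_eq_rePullback hfw hfw']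

/-- for a nonconstant entire `f` and `p` with `f(p) = 0`, the Gaussian
curvature of `h|dz|²` tends to `−4` as `z → p` within `ℂ ∖ f⁻¹(0)`. -/
theorem stmt8 (f : ℂ → ℂ) (hf : Differentiable ℂ f)
    (hfnc : ¬ ∃ c : ℂ, ∀ z, f z = c)
    (p : ℂ) (hfp : f p = 0) :
    Tendsto (gaussCurv (fun z =>
        ‖deriv f z‖ ^ 2 * (1 + ‖f z‖ ^ 2 * u (‖f z‖ ^ 2) ^ 2) + 1))
      (𝓝[(f ⁻¹' {0})ᶜ] p) (𝓝 (-4)) := by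
  refine stmt8_general f p (hf.analyticAt p) hfp fun hzero => hfnc ⟨0, congr_fun ?_⟩
  exact AnalyticOnNhd.eq_of_eventuallyEq (fun z _ => hf.analyticAt z) analyticOnNhd_const hzero
end

section
/- Let k ≥ 1 be an integer and define h_k : ℂ∖{0} → ℝ by h_k(z) = k²·|z|^{2(k−1)}·(1 + |z|^{2k}·u(|z|^{2k})²). Then h_k(z) → +∞ as z → 0 with z ∈ ℂ∖{0}. -/
/-!
For `0 < r < 1`, put `t = r ^ (2 * α)`. As `t * log t * u t = t - 1` and `log t = 2 * α * log r`,
the term `α ^ 2 * r ^ (2 * (α - 1)) * (t * u t ^ 2)` equals `((t - 1) / (r * log r)) ^ 2 / 4`.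
As `r → 0⁺`, `r * log r → 0` while `|t - 1|` stays away from `0`, so this square blows up.
-/

open Complex Filter Topology Metric
open scoped ComplexOrder

lemma mul_log_mul_u {t : ℝ} (ht : 0 < t) : t * Real.log t * u t = t - 1 := by
  rcases eq_or_ne t 1 with rfl | ht1
  · simp
  · rw [u, if_neg ht1]
    exact mul_div_cancel₀ _ (mul_ne_zero ht.ne' (Real.log_ne_zero_of_pos_of_ne_one ht ht1))

lemma tendsto_mul_log_nhdsGT_zero_nhdsLT_zero :
    Tendsto (fun r : ℝ => r * Real.log r) (𝓝[>] 0) (𝓝[<] 0) := by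
  refine tendsto_nhdsWithin_iff.2 ⟨?_, ?_⟩
  · exact (Real.continuous_mul_log.tendsto' 0 0 (zero_mul _)).mono_left nhdsWithin_le_nhds
  · filter_upwards [Ioo_mem_nhdsGT zero_lt_one] with r ⟨hr0, hr1⟩
    exact mul_neg_of_pos_of_neg hr0 (Real.log_neg hr0 hr1)

lemma exists_pos_eventually_le_sq_rpow_sub_one_nhdsGT_zero {β : ℝ} (hβ : β ≠ 0) :
    ∃ c > 0, ∀ᶠ r : ℝ in 𝓝[>] 0, c ≤ (r ^ β - 1) ^ 2 := by
  rcases hβ.lt_or_gt with hneg | hpos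
  · refine ⟨1, one_pos, ?_⟩
    filter_upwards [(tendsto_rpow_neg_nhdsGT_zero hneg).eventually_ge_atTop 2] with r hr
    nlinarith
  · have hlim : Tendsto (fun r : ℝ => (r ^ β - 1) ^ 2) (𝓝[>] 0) (𝓝 1) := by
      have hrpow := (Real.continuousAt_rpow_const 0 β (.inr hpos.le)).tendsto
      rw [Real.zero_rpow hpos.ne'] at hrpow
      simpa using ((hrpow.sub_const 1).pow 2).mono_left nhdsWithin_le_nhds
    exact ⟨1 / 2, one_half_pos, hlim.eventually_const_le one_half_lt_one⟩

lemma tendsto_sq_rpow_sub_one_div_mul_log_nhdsGT_zero {β : ℝ} (hβ : β ≠ 0) :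
    Tendsto (fun r : ℝ => ((r ^ β - 1) / (r * Real.log r)) ^ 2) (𝓝[>] 0) atTop := by
  obtain ⟨c, hc, hle⟩ := exists_pos_eventually_le_sq_rpow_sub_one_nhdsGT_zero hβ
  have hinv : Tendsto (fun r : ℝ => ((r * Real.log r)⁻¹) ^ 2) (𝓝[>] 0) atTop := by
    have hbot := tendsto_inv_nhdsLT_zero.comp tendsto_mul_log_nhdsGT_zero_nhdsLT_zero
    simpa only [Function.comp_def, sq] using hbot.atBot_mul_atBot₀ hbot
  refine tendsto_atTop_mono' _ ?_ (hinv.const_mul_atTop hc)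
  filter_upwards [hle] with r hr
  rw [div_eq_mul_inv, mul_pow]
  gcongr

lemma sq_mul_rpow_mul_sq_u_mul_four_mul_sq_mul_log (α : ℝ) {r : ℝ} (hr : 0 < r) :
    α ^ 2 * r ^ (2 * (α - 1)) * (r ^ (2 * α) * u (r ^ (2 * α)) ^ 2) *
      (4 * (r * Real.log r) ^ 2) = (r ^ (2 * α) - 1) ^ 2 := by
  have hrpow : r ^ (2 * (α - 1)) * r ^ 2 = r ^ (2 * α) := by
    rw [← Real.rpow_natCast, ← Real.rpow_add hr]
    congr 1
    push_cast
    ring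
  have hlog : Real.log (r ^ (2 * α)) = 2 * α * Real.log r := Real.log_rpow hr _
  calc
    _ = r ^ (2 * (α - 1)) * r ^ 2 *
          (r ^ (2 * α) * (2 * α * Real.log r) ^ 2 * u (r ^ (2 * α)) ^ 2) := by ring
    _ = (r ^ (2 * α) * Real.log (r ^ (2 * α)) * u (r ^ (2 * α))) ^ 2 := by
      rw [hrpow, hlog]
      ring
    _ = (r ^ (2 * α) - 1) ^ 2 := by rw [mul_log_mul_u (Real.rpow_pos_of_pos hr _)]

lemma sq_rpow_sub_one_div_mul_log_div_four_le (α : ℝ) {r : ℝ} (hr : 0 < r) :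
    ((r ^ (2 * α) - 1) / (r * Real.log r)) ^ 2 / 4 ≤
      α ^ 2 * r ^ (2 * (α - 1)) * (1 + r ^ (2 * α) * u (r ^ (2 * α)) ^ 2) := by
  rw [div_pow, div_div, mul_comm _ (4 : ℝ)]
  refine div_le_of_le_mul₀ (by positivity) (by positivity) ?_
  rw [← sq_mul_rpow_mul_sq_u_mul_four_mul_sq_mul_log α hr]
  gcongr
  exact le_add_of_nonneg_left zero_le_one

theorem stmt11_general {E : Type*} [NormedAddGroup E] {α : ℝ} (hα : α ≠ 0) :
    Tendsto (fun w : E =>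
        α ^ 2 * ‖w‖ ^ (2 * (α - 1)) *
          (1 + ‖w‖ ^ (2 * α) * u (‖w‖ ^ (2 * α)) ^ 2))
      (𝓝[≠] 0) atTop := by
  have hradial := (tendsto_sq_rpow_sub_one_div_mul_log_nhdsGT_zero
    (mul_ne_zero two_ne_zero hα)).atTop_div_const four_pos
  refine tendsto_atTop_mono' _ ?_ (hradial.comp tendsto_norm_nhdsNE_zero)
  filter_upwards [self_mem_nhdsWithin] with w hw
  exact sq_rpow_sub_one_div_mul_log_div_four_le α (norm_pos_iff.2 hw)

/-- `h_k(z) → +∞` as `z → 0` in `ℂ∖{0}`. -/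
theorem stmt11 (k : ℕ) (hk : 1 ≤ k) :
    Tendsto (fun w : ℂ =>
        (k : ℝ) ^ 2 * ‖w‖ ^ (2 * (k - 1)) *
          (1 + ‖w‖ ^ (2 * k) * u (‖w‖ ^ (2 * k)) ^ 2))
      (𝓝[≠] (0 : ℂ)) atTop := by
  have hk0 : (k : ℝ) ≠ 0 := Nat.cast_ne_zero.2 (Nat.one_le_iff_ne_zero.1 hk)
  exact_mod_cast stmt11_general (E := ℂ) hk0
end

section
/- Let k ≥ 1 be an integer and define h_k : ℂ∖{0} → ℝ by h_k(z) = k²·|z|^{2(k−1)}·(1 + |z|^{2k}·u(|z|^{2k})²). Then, as z → 0 with z ∈ ℂ∖{0}, each of the quantities (∂h_k)(z)/h_k(z)³, (∂̄h_k)(z)/h_k(z)³, and (∂∂̄h_k)(z)/h_k(z)³ tends to 0. -/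
open Complex Filter Topology Metric
open scoped ComplexOrder

/-! Put `s = |z|²` and `κ = k`. For `0 < s < 1` the density is `h = G(p, m) / s` with `p = s ^ κ`,
`m = 1 / log s` and `G = κ² p + (1 - p)² m²`. The Euler operator `θ = s d/ds` maps `p` to `κ p` and
`m` to `-m²`, so it acts as a derivation on polynomials in `p` and `m`, and differentiating the
radial function `h` gives `∂h = z̄ (θ - 1)G / s²`, `∂̄h = z (θ - 1)G / s²` and
`∂∂̄h = (θ - 1)²G / s²`. As `s → 0`, polynomials in `p` and `m` stay bounded while `G log² s → 1`,
so each quotient by `h³ = G³ / s³` is `O(s |log s|⁶)`. -/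

section WirtingerDerivatives

variable {f g : ℂ → ℂ} {z : ℂ}

theorem wdz_congr (h : f =ᶠ[𝓝 z] g) : wdz f z = wdz g z := by
  rw [wdz, wdz, h.fderiv_eq]

theorem wdzbar_congr (h : f =ᶠ[𝓝 z] g) : wdzbar f z = wdzbar g z := by
  rw [wdzbar, wdzbar, h.fderiv_eq]

theorem wdz_id : wdz (fun w => w) z = 1 := by
  rw [wdz, fderiv_fun_id]
  simp

theorem wdz_mul (hf : DifferentiableAt ℝ f z) (hg : DifferentiableAt ℝ g z) :
    wdz (fun w => f w * g w) z = wdz f z * g z + f z * wdz g z := by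
  simp only [wdz, fderiv_fun_mul hf hg, add_apply, smul_apply, smul_eq_mul]
  ring

end WirtingerDerivatives

section RadialFunctions

open scoped ComplexConjugate

variable {f : ℝ → ℂ} {f' : ℂ} {z : ℂ}

theorem hasFDerivAt_comp_norm_sq (hf : HasDerivAt f f' (‖z‖ ^ 2)) :
    HasFDerivAt (fun w : ℂ => f (‖w‖ ^ 2))
      ((ContinuousLinearMap.toSpanSingleton ℝ f').comp (2 • innerSL ℝ z)) z :=
  hf.hasFDerivAt.comp z (hasStrictFDerivAt_norm_sq z).hasFDerivAt

theorem wdz_comp_norm_sq (hf : HasDerivAt f f' (‖z‖ ^ 2)) :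
    wdz (fun w => f (‖w‖ ^ 2)) z = f' * conj z := by
  rw [wdz, (hasFDerivAt_comp_norm_sq hf).fderiv]
  apply Complex.ext <;> simp [Complex.inner] <;> ring

theorem wdzbar_comp_norm_sq (hf : HasDerivAt f f' (‖z‖ ^ 2)) :
    wdzbar (fun w => f (‖w‖ ^ 2)) z = f' * z := by
  rw [wdzbar, (hasFDerivAt_comp_norm_sq hf).fderiv]
  apply Complex.ext <;> simp [Complex.inner] <;> ring

variable {h : ℂ → ℝ} {F : ℝ → ℝ}

theorem wdzR_of_eventuallyEq_comp_norm_sq {F' : ℝ}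
    (hh : h =ᶠ[𝓝 z] fun w => F (‖w‖ ^ 2)) (hF : HasDerivAt F F' (‖z‖ ^ 2)) :
    wdzR h z = F' * conj z :=
  (wdz_congr (hh.fun_comp ofReal)).trans (wdz_comp_norm_sq hF.ofReal_comp)

theorem wdzbarR_of_eventuallyEq_comp_norm_sq {F' : ℝ}
    (hh : h =ᶠ[𝓝 z] fun w => F (‖w‖ ^ 2)) (hF : HasDerivAt F F' (‖z‖ ^ 2)) :
    wdzbarR h z = F' * z :=
  (wdzbar_congr (hh.fun_comp ofReal)).trans (wdzbar_comp_norm_sq hF.ofReal_comp)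

theorem wlapR_of_eventuallyEq_comp_norm_sq {F' : ℝ → ℝ} {F'' : ℝ}
    (hh : h =ᶠ[𝓝 z] fun w => F (‖w‖ ^ 2))
    (hF : ∀ᶠ s in 𝓝 (‖z‖ ^ 2), HasDerivAt F (F' s) s) (hF' : HasDerivAt F' F'' (‖z‖ ^ 2)) :
    wlapR h z = ((F' (‖z‖ ^ 2) + ‖z‖ ^ 2 * F'' : ℝ) : ℂ) := by
  have norm_sq_tendsto : Tendsto (fun w : ℂ => ‖w‖ ^ 2) (𝓝 z) (𝓝 (‖z‖ ^ 2)) :=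
    (continuous_norm.pow 2).tendsto z
  have wdzbarR_eq : wdzbarR h =ᶠ[𝓝 z] fun w => (F' (‖w‖ ^ 2) : ℂ) * w := by
    filter_upwards [hh.eventuallyEq_nhds, norm_sq_tendsto.eventually hF] with w hw hFw
    exact wdzbarR_of_eventuallyEq_comp_norm_sq hw hFw
  rw [wlapR, wdz_congr wdzbarR_eq,
    wdz_mul (hasFDerivAt_comp_norm_sq hF'.ofReal_comp).differentiableAt differentiableAt_fun_id,
    wdz_id, wdz_comp_norm_sq hF'.ofReal_comp, mul_assoc, conj_mul']
  push_cast
  ring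

end RadialFunctions

section PuncturedLimits

theorem tendsto_norm_sq_nhdsNE_zero {E : Type*} [NormedAddCommGroup E] :
    Tendsto (fun z : E => ‖z‖ ^ 2) (𝓝[≠] 0) (𝓝[>] 0) :=
  tendsto_nhdsWithin_iff.2
    ⟨((continuous_norm.pow 2).tendsto' 0 0 (by simp)).mono_left nhdsWithin_le_nhds,
      eventually_mem_nhdsWithin.mono fun _ hz => pow_pos (norm_pos_iff.2 hz) 2⟩

theorem eventually_norm_sq_mem_Ioo {E : Type*} [NormedAddCommGroup E] :
    ∀ᶠ z : E in 𝓝[≠] 0, ‖z‖ ^ 2 ∈ Set.Ioo 0 1 :=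
  tendsto_norm_sq_nhdsNE_zero.eventually (Ioo_mem_nhdsGT one_pos)

theorem tendsto_rpow_nhdsGT_zero {r : ℝ} (hr : 0 < r) :
    Tendsto (fun s : ℝ => s ^ r) (𝓝[>] 0) (𝓝 0) :=
  ((Real.continuous_rpow_const hr.le).tendsto' 0 0 (Real.zero_rpow hr.ne')).mono_left
    nhdsWithin_le_nhds

theorem tendsto_log_pow_mul_rpow_nhdsGT_zero (n : ℕ) {r : ℝ} (hr : 0 < r) :
    Tendsto (fun s => Real.log s ^ n * s ^ r) (𝓝[>] 0) (𝓝 0) := by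
  have q_pos : 0 < r / (n + 1) := by positivity
  have h : Tendsto (fun s => (Real.log s * s ^ (r / (n + 1))) ^ n * s ^ (r / (n + 1)))
      (𝓝[>] 0) (𝓝 (0 ^ n * 0)) :=
    ((tendsto_log_mul_rpow_nhdsGT_zero q_pos).pow n).mul (tendsto_rpow_nhdsGT_zero q_pos)
  rw [mul_zero] at h
  refine h.congr' ?_
  filter_upwards [self_mem_nhdsWithin] with s (hs : 0 < s)
  rw [mul_pow, mul_assoc, ← Real.rpow_mul_natCast hs.le, ← Real.rpow_add hs]
  congr 2
  field_simp

end PuncturedLimits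

section PowLog

open MvPolynomial

theorem hasDerivAt_eval_mkDerivation {𝕜 σ : Type*} [NontriviallyNormedField 𝕜] {v : 𝕜 → σ → 𝕜}
    {V : σ → MvPolynomial σ 𝕜} {c t : 𝕜}
    (hv : ∀ i, HasDerivAt (fun s => v s i) (c * eval (v t) (V i)) t) (P : MvPolynomial σ 𝕜) :
    HasDerivAt (fun s => eval (v s) P) (c * eval (v t) (mkDerivation 𝕜 V P)) t := by
  induction P using MvPolynomial.induction_on with
  | C a => simpa using hasDerivAt_const t a
  | add P Q hP hQ => simpa [mul_add] using hP.fun_add hQ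
  | mul_X P i hP =>
    simp only [map_mul, eval_X, Derivation.leibniz, mkDerivation_X, map_add, smul_eq_mul]
    exact (hP.fun_mul (hv i)).congr_deriv (by ring)

/-- The substitution `s ↦ (s ^ κ, 1 / log s)` for the two variables of a polynomial. -/
noncomputable def powInvLog (κ s : ℝ) : Fin 2 → ℝ := ![s ^ κ, (Real.log s)⁻¹]

/-- The Euler operator `s d/ds` transported to polynomials in `X 0 = s ^ κ`, `X 1 = 1 / log s`. -/
noncomputable def eulerDerivation (κ : ℝ) :
    Derivation ℝ (MvPolynomial (Fin 2) ℝ) (MvPolynomial (Fin 2) ℝ) :=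
  mkDerivation ℝ ![C κ * X 0, -X 1 ^ 2]

/-- The operator `s d/ds - 1` on polynomials in `s ^ κ` and `1 / log s`. With
`θ = s d/ds` one has `θ (F / s) = ((θ - 1) F) / s`. -/
noncomputable def eulerSubOne (κ : ℝ) (P : MvPolynomial (Fin 2) ℝ) : MvPolynomial (Fin 2) ℝ :=
  eulerDerivation κ P - P

/-- The function `P(s ^ κ, 1 / log s) / s ^ n`. As `P` and `n` vary these form a class closed under
differentiation on `0 < s < 1`, to which `h_κ` and its derivatives belong as functions of `|z|²`. -/
noncomputable def powLogQuot (κ : ℝ) (P : MvPolynomial (Fin 2) ℝ) (n : ℕ) (s : ℝ) : ℝ :=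
  eval (powInvLog κ s) P / s ^ n

/-- The polynomial `G` for which `h_κ(z) = G(s ^ κ, 1 / log s) / s` with `s = |z|²`, `0 < s < 1`.
The logarithm comes from `s ^ κ * u (s ^ κ) = (s ^ κ - 1) / (κ * log s)`. -/
noncomputable def densityPoly (κ : ℝ) : MvPolynomial (Fin 2) ℝ :=
  C (κ ^ 2) * X 0 + (1 - X 0) ^ 2 * X 1 ^ 2

variable {κ s : ℝ}

theorem hasDerivAt_eval_powInvLog (hs : s ∈ Set.Ioo 0 1) (P : MvPolynomial (Fin 2) ℝ) :
    HasDerivAt (fun t => eval (powInvLog κ t) P)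
      (s⁻¹ * eval (powInvLog κ s) (eulerDerivation κ P)) s := by
  have log_ne : Real.log s ≠ 0 := (Real.log_neg hs.1 hs.2).ne
  refine hasDerivAt_eval_mkDerivation (fun i => ?_) P
  fin_cases i
  · refine (Real.hasDerivAt_rpow_const (.inl hs.1.ne')).congr_deriv ?_
    simp only [powInvLog, Real.rpow_sub_one hs.1.ne', Fin.zero_eta, Matrix.cons_val_zero, map_mul,
      eval_C, eval_X]
    ring
  · refine ((Real.hasDerivAt_log hs.1.ne').fun_inv log_ne).congr_deriv ?_
    simp only [powInvLog, Fin.mk_one, Matrix.cons_val_one, Matrix.cons_val_fin_one, map_neg,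
      map_pow, eval_X]
    ring

theorem hasDerivAt_powLogQuot (P : MvPolynomial (Fin 2) ℝ) (n : ℕ) (hs : s ∈ Set.Ioo 0 1) :
    HasDerivAt (powLogQuot κ P n) (powLogQuot κ (eulerDerivation κ P - n • P) (n + 1) s) s := by
  have s_ne : s ≠ 0 := hs.1.ne'
  refine ((hasDerivAt_eval_powInvLog hs P).fun_div (hasDerivAt_pow n s)
    (pow_ne_zero n s_ne)).congr_deriv ?_
  rw [powLogQuot, map_sub, map_nsmul, nsmul_eq_mul]
  cases n with
  | zero => simp [div_eq_inv_mul]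
  | succ n =>
    simp only [Nat.add_sub_cancel]
    field_simp
    ring

theorem hasDerivAt_powLogQuot_one (P : MvPolynomial (Fin 2) ℝ) (hs : s ∈ Set.Ioo 0 1) :
    HasDerivAt (powLogQuot κ P 1) (powLogQuot κ (eulerSubOne κ P) 2 s) s := by
  simpa only [eulerSubOne, one_smul] using hasDerivAt_powLogQuot P 1 hs

theorem powLogQuot_add_mul_powLogQuot (hs : s ≠ 0) (P : MvPolynomial (Fin 2) ℝ) :
    powLogQuot κ P 2 s + s * powLogQuot κ (eulerDerivation κ P - 2 • P) 3 s =
      powLogQuot κ (eulerSubOne κ P) 2 s := by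
  simp only [powLogQuot, eulerSubOne, two_nsmul, map_sub, map_add]
  field_simp
  ring

theorem eval_densityPoly :
    eval (powInvLog κ s) (densityPoly κ) =
      κ ^ 2 * s ^ κ + (1 - s ^ κ) ^ 2 * (Real.log s)⁻¹ ^ 2 := by
  simp [densityPoly, powInvLog]

theorem rpow_mul_one_add_rpow_mul_u_sq (hκ : κ ≠ 0) (hs : s ∈ Set.Ioo 0 1) :
    κ ^ 2 * s ^ (κ - 1) * (1 + s ^ κ * u (s ^ κ) ^ 2) = powLogQuot κ (densityPoly κ) 1 s := by
  have log_ne : Real.log s ≠ 0 := (Real.log_neg hs.1 hs.2).ne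
  have rpow_ne_zero : s ^ κ ≠ 0 := (Real.rpow_pos_of_pos hs.1 κ).ne'
  have log_rpow : Real.log (s ^ κ) = κ * Real.log s := Real.log_rpow hs.1 κ
  have rpow_ne_one : s ^ κ ≠ 1 := fun h =>
    mul_ne_zero hκ log_ne (by rw [← log_rpow, h, Real.log_one])
  have s_ne : s ≠ 0 := hs.1.ne'
  rw [u, if_neg rpow_ne_one, log_rpow, Real.rpow_sub_one s_ne, powLogQuot,
    eval_densityPoly]
  field_simp
  ring

theorem tendsto_eval_powInvLog (hκ : 0 < κ) (P : MvPolynomial (Fin 2) ℝ) :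
    Tendsto (fun s => eval (powInvLog κ s) P) (𝓝[>] 0) (𝓝 (eval 0 P)) := by
  have powInvLog_tendsto : Tendsto (powInvLog κ) (𝓝[>] 0) (𝓝 0) := by
    refine tendsto_pi_nhds.2 fun i => ?_
    fin_cases i
    · exact tendsto_rpow_nhdsGT_zero hκ
    · exact Real.tendsto_log_nhdsGT_zero.inv_tendsto_atBot
  exact (P.continuous_eval.tendsto 0).comp powInvLog_tendsto

theorem tendsto_log_sq_mul_eval_densityPoly (hκ : 0 < κ) :
    Tendsto (fun s => Real.log s ^ 2 * eval (powInvLog κ s) (densityPoly κ)) (𝓝[>] 0) (𝓝 1) := by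
  have h : Tendsto (fun s : ℝ => κ ^ 2 * (Real.log s ^ 2 * s ^ κ) + (1 - s ^ κ) ^ 2)
      (𝓝[>] 0) (𝓝 (κ ^ 2 * 0 + (1 - 0) ^ 2)) :=
    ((tendsto_log_pow_mul_rpow_nhdsGT_zero 2 hκ).const_mul _).add
      (((tendsto_rpow_nhdsGT_zero hκ).const_sub 1).pow 2)
  rw [mul_zero, sub_zero, one_pow, zero_add] at h
  refine h.congr' ?_
  filter_upwards [Real.tendsto_log_nhdsGT_zero.eventually (eventually_ne_atBot 0)] with s log_ne
  rw [eval_densityPoly]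
  field_simp

theorem tendsto_powLogQuot_div_densityPoly_pow (hκ : 0 < κ) (P : MvPolynomial (Fin 2) ℝ)
    {m n : ℕ} (hmn : m < n) :
    Tendsto (fun s => powLogQuot κ P m s / powLogQuot κ (densityPoly κ) 1 s ^ n)
      (𝓝[>] 0) (𝓝 0) := by
  have log_pow_mul_pow_tendsto :
      Tendsto (fun s : ℝ => Real.log s ^ (2 * n) * s ^ (n - m)) (𝓝[>] 0) (𝓝 0) := by
    simpa only [Real.rpow_natCast] using
      tendsto_log_pow_mul_rpow_nhdsGT_zero (2 * n) (Nat.cast_pos.2 (Nat.sub_pos_of_lt hmn))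
  have h := (log_pow_mul_pow_tendsto.mul (tendsto_eval_powInvLog hκ P)).div
    ((tendsto_log_sq_mul_eval_densityPoly hκ).pow n) (pow_ne_zero n one_ne_zero)
  rw [zero_mul, zero_div] at h
  refine h.congr' ?_
  filter_upwards [self_mem_nhdsWithin,
    Real.tendsto_log_nhdsGT_zero.eventually (eventually_ne_atBot 0)] with s (hs : 0 < s) log_ne
  simp only [powLogQuot, Pi.div_apply]
  rw [mul_pow, ← pow_mul, mul_assoc, mul_div_mul_left _ _ (pow_ne_zero _ log_ne), div_pow, pow_one,
    pow_sub₀ s hs.ne' hmn.le, div_div_div_eq]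
  ring

end PowLog

/-- The density `h_κ` of the conformal metric `h_κ |dz|²`, with a real exponent `κ` in place of
the integer `k`. -/
noncomputable def conformalDensity (κ : ℝ) (z : ℂ) : ℝ :=
  κ ^ 2 * ‖z‖ ^ (2 * (κ - 1)) * (1 + ‖z‖ ^ (2 * κ) * u (‖z‖ ^ (2 * κ)) ^ 2)

section ConformalDensity

open scoped ComplexConjugate

variable {κ : ℝ} {z : ℂ}

theorem conformalDensity_eq_powLogQuot (hκ : κ ≠ 0) (hz : ‖z‖ ^ 2 ∈ Set.Ioo 0 1) :
    conformalDensity κ z = powLogQuot κ (densityPoly κ) 1 (‖z‖ ^ 2) := by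
  have norm_rpow (a : ℝ) : ‖z‖ ^ (2 * a) = (‖z‖ ^ 2) ^ a :=
    mod_cast Real.rpow_natCast_mul (norm_nonneg z) 2 a
  rw [conformalDensity, norm_rpow, norm_rpow, rpow_mul_one_add_rpow_mul_u_sq hκ hz]

theorem conformalDensity_eventuallyEq_powLogQuot (hκ : κ ≠ 0) (hz : ‖z‖ ^ 2 ∈ Set.Ioo 0 1) :
    conformalDensity κ =ᶠ[𝓝 z] fun w => powLogQuot κ (densityPoly κ) 1 (‖w‖ ^ 2) := by
  filter_upwards [(continuous_norm.pow 2).continuousAt.preimage_mem_nhds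
    (isOpen_Ioo.mem_nhds hz)] with w hw
  exact conformalDensity_eq_powLogQuot hκ hw

theorem wdzR_conformalDensity (hκ : κ ≠ 0) (hz : ‖z‖ ^ 2 ∈ Set.Ioo 0 1) :
    wdzR (conformalDensity κ) z =
      powLogQuot κ (eulerSubOne κ (densityPoly κ)) 2 (‖z‖ ^ 2) * conj z :=
  wdzR_of_eventuallyEq_comp_norm_sq (conformalDensity_eventuallyEq_powLogQuot hκ hz)
    (hasDerivAt_powLogQuot_one _ hz)

theorem wdzbarR_conformalDensity (hκ : κ ≠ 0) (hz : ‖z‖ ^ 2 ∈ Set.Ioo 0 1) :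
    wdzbarR (conformalDensity κ) z =
      powLogQuot κ (eulerSubOne κ (densityPoly κ)) 2 (‖z‖ ^ 2) * z :=
  wdzbarR_of_eventuallyEq_comp_norm_sq (conformalDensity_eventuallyEq_powLogQuot hκ hz)
    (hasDerivAt_powLogQuot_one _ hz)

theorem wlapR_conformalDensity (hκ : κ ≠ 0) (hz : ‖z‖ ^ 2 ∈ Set.Ioo 0 1) :
    wlapR (conformalDensity κ) z =
      powLogQuot κ (eulerSubOne κ (eulerSubOne κ (densityPoly κ))) 2 (‖z‖ ^ 2) := by
  have hasDerivAt_near : ∀ᶠ s in 𝓝 (‖z‖ ^ 2), HasDerivAt (powLogQuot κ (densityPoly κ) 1)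
      (powLogQuot κ (eulerSubOne κ (densityPoly κ)) 2 s) s :=
    (isOpen_Ioo.eventually_mem hz).mono fun s hs => hasDerivAt_powLogQuot_one _ hs
  rw [wlapR_of_eventuallyEq_comp_norm_sq (conformalDensity_eventuallyEq_powLogQuot hκ hz)
    hasDerivAt_near (hasDerivAt_powLogQuot _ 2 hz), powLogQuot_add_mul_powLogQuot hz.1.ne']

theorem tendsto_powLogQuot_norm_sq_div_conformalDensity_pow (hκ : 0 < κ)
    (P : MvPolynomial (Fin 2) ℝ) {m n : ℕ} (hmn : m < n) :
    Tendsto (fun z => (powLogQuot κ P m (‖z‖ ^ 2) : ℂ) / (conformalDensity κ z : ℂ) ^ n)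
      (𝓝[≠] 0) (𝓝 0) := by
  have real_tendsto := (tendsto_powLogQuot_div_densityPoly_pow hκ P hmn).comp
    (tendsto_norm_sq_nhdsNE_zero (E := ℂ))
  refine ((continuous_ofReal.tendsto' 0 0 ofReal_zero).comp real_tendsto).congr' ?_
  filter_upwards [eventually_norm_sq_mem_Ioo] with z hz
  simp [conformalDensity_eq_powLogQuot hκ.ne' hz]

end ConformalDensity

theorem stmt12_general {κ : ℝ} (hκ : 0 < κ) :
    Tendsto (fun z => wdzR (conformalDensity κ) z / (conformalDensity κ z : ℂ) ^ 3)
      (𝓝[≠] 0) (𝓝 0) ∧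
    Tendsto (fun z => wdzbarR (conformalDensity κ) z / (conformalDensity κ z : ℂ) ^ 3)
      (𝓝[≠] 0) (𝓝 0) ∧
    Tendsto (fun z => wlapR (conformalDensity κ) z / (conformalDensity κ z : ℂ) ^ 3)
      (𝓝[≠] 0) (𝓝 0) := by
  have ratio_tendsto (P : MvPolynomial (Fin 2) ℝ) :=
    tendsto_powLogQuot_norm_sq_div_conformalDensity_pow hκ P (by norm_num : 2 < 3)
  have ratio_mul_tendsto (P : MvPolynomial (Fin 2) ℝ) {f : ℂ → ℂ} (hf : Continuous f)
      (hf₀ : f 0 = 0) :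
      Tendsto (fun z => powLogQuot κ P 2 (‖z‖ ^ 2) * f z / (conformalDensity κ z : ℂ) ^ 3)
        (𝓝[≠] 0) (𝓝 0) := by
    simpa only [div_mul_eq_mul_div, mul_zero] using
      (ratio_tendsto P).mul ((hf.tendsto' 0 0 hf₀).mono_left nhdsWithin_le_nhds)
  refine ⟨
    (ratio_mul_tendsto (eulerSubOne κ (densityPoly κ)) continuous_conj (map_zero _)).congr' ?_,
    (ratio_mul_tendsto (eulerSubOne κ (densityPoly κ)) continuous_id rfl).congr' ?_,
    (ratio_tendsto (eulerSubOne κ (eulerSubOne κ (densityPoly κ)))).congr' ?_⟩ <;>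
    filter_upwards [eventually_norm_sq_mem_Ioo] with z hz
  · rw [wdzR_conformalDensity hκ.ne' hz]
  · rw [wdzbarR_conformalDensity hκ.ne' hz, id_eq]
  · rw [wlapR_conformalDensity hκ.ne' hz]

/-- `∂h_k/h_k³`, `∂̄h_k/h_k³` and `∂∂̄h_k/h_k³` all tend to `0`
as `z → 0` in `ℂ∖{0}`. -/
theorem stmt12 (k : ℕ) (hk : 1 ≤ k)
    (hkfun : ℂ → ℝ)
    (hkdef : ∀ w, hkfun w =
      (k : ℝ) ^ 2 * ‖w‖ ^ (2 * (k - 1)) *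
        (1 + ‖w‖ ^ (2 * k) * u (‖w‖ ^ (2 * k)) ^ 2)) :
    Tendsto (fun z => wdzR hkfun z / (hkfun z : ℂ) ^ 3) (𝓝[≠] (0 : ℂ)) (𝓝 0) ∧
    Tendsto (fun z => wdzbarR hkfun z / (hkfun z : ℂ) ^ 3) (𝓝[≠] (0 : ℂ)) (𝓝 0) ∧
    Tendsto (fun z => wlapR hkfun z / (hkfun z : ℂ) ^ 3) (𝓝[≠] (0 : ℂ)) (𝓝 0) := by
  obtain rfl : hkfun = conformalDensity k := funext fun w => by
    rw [hkdef, conformalDensity, ← Nat.cast_pred hk]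
    norm_cast
  exact stmt12_general (by positivity)
end

section
/- Let U ⊆ ℂⁿ (n ≥ 1) be open and let f_j : U → ℂ (j ∈ ℕ) and f₀ : U → ℂ be holomorphic with f_j → f₀ uniformly on every compact subset of U. Let p ∈ U with f₀(p) ≠ 0, let X be a holomorphic map from an open neighborhood of p in U to ℂⁿ with X nowhere vanishing, let ε > 0, and let Z : B(0,ε) → U be holomorphic with Z(0) = p, Z′(T) = X(Z(T)), and f₀(Z(T)) ≠ 0 for all T ∈ B(0,ε). For each holomorphic f with f(Z(T)) ≠ 0 near T = 0, define h_f(T) = (1 + |f(Z(T))|²·u(|f(Z(T))|²)²)·|df(Z(T))(X(Z(T)))|² + ‖X(Z(T))‖², and let 𝒦_f(0) = −2·(h_f(0)·(∂∂̄h_f)(0) − (∂h_f)(0)·(∂̄h_f)(0))/h_f(0)³ be the Gaussian curvature of h_f(T)|dT|² at T = 0. Then for all sufficiently large j the function h_{f_j} is defined near T = 0, and 𝒦_{f_j}(0) → 𝒦_{f₀}(0) as j → ∞. -/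
/-!
Along the leaf `Z` one has `X ∘ Z = Z'`, hence `df(X) ∘ Z = (f ∘ Z)'`, so `h_f = Φ ∘ γ_f` with
`γ_f = (f ∘ Z, (f ∘ Z)', Z')` holomorphic and `Φ(a, b, w) = (1 + |a|² u(|a|²)²) |b|² + ‖w‖²`.
Since `u` is real-analytic on `(0, ∞)`, the function `Φ` is smooth where `a ≠ 0`. Locally uniform
convergence of holomorphic functions passes to derivatives, so the curves `γ_{f_j}` converge to
`γ_{f₀}` together with their derivatives, and by the chain rule the 2-jets of `h_{f_j}` converge
as well. The curvature at a point is a continuous function of the 2-jet wherever `h ≠ 0`.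
-/

open Complex Filter Topology Metric
open scoped ComplexOrder

lemma u_eq_inv_mul_dslope_log (t : ℝ) : u t = (t * dslope Real.log 1 t)⁻¹ := by
  rcases eq_or_ne t 1 with rfl | ht
  · simp [u]
  · rw [u, if_neg ht, dslope_of_ne _ ht, slope_def_field, Real.log_one, sub_zero,
      ← mul_div_assoc, inv_div]

lemma analyticAt_u {t : ℝ} (ht : 0 < t) : AnalyticAt ℝ u t := by
  rcases eq_or_ne t 1 with rfl | ht1
  · obtain ⟨q, hq⟩ := analyticAt_log one_pos
    have hslope : AnalyticAt ℝ (dslope Real.log 1) 1 :=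
      hq.has_fpower_series_dslope_fslope.analyticAt
    rw [funext u_eq_inv_mul_dslope_log]
    exact (analyticAt_id.mul hslope).inv (by simp)
  · have hu : (fun s => (s - 1) / (s * Real.log s)) =ᶠ[𝓝 t] u := by
      filter_upwards [isOpen_ne.mem_nhds ht1] with s hs using (if_neg hs).symm
    exact ((analyticAt_id.sub analyticAt_const).div (analyticAt_id.mul (analyticAt_log ht))
      (mul_ne_zero ht.ne' (Real.log_ne_zero_of_pos_of_ne_one ht ht1))).congr hu

section SecondDerivative

variable {𝕜 E F G : Type*} [NontriviallyNormedField 𝕜]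
  [NormedAddCommGroup E] [NormedSpace 𝕜 E] [NormedAddCommGroup F] [NormedSpace 𝕜 F]
  [NormedAddCommGroup G] [NormedSpace 𝕜 G]

lemma differentiableAt_fderiv_of_contDiffAt {f : E → F} {x : E} (hf : ContDiffAt 𝕜 2 f x) :
    DifferentiableAt 𝕜 (fderiv 𝕜 f) x :=
  (hf.fderiv_right (m := 1) (by norm_num)).differentiableAt (by simp)

lemma fderiv_fderiv_comp_apply {g : F → G} {f : E → F} {x : E}
    (hg : ContDiffAt 𝕜 2 g (f x)) (hf : ContDiffAt 𝕜 2 f x) (v w : E) :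
    fderiv 𝕜 (fderiv 𝕜 (g ∘ f)) x v w =
      fderiv 𝕜 (fderiv 𝕜 g) (f x) (fderiv 𝕜 f x v) (fderiv 𝕜 f x w) +
        fderiv 𝕜 g (f x) (fderiv 𝕜 (fderiv 𝕜 f) x v w) := by
  have hchain : fderiv 𝕜 (g ∘ f) =ᶠ[𝓝 x] fun y => fderiv 𝕜 g (f y) ∘SL fderiv 𝕜 f y := by
    filter_upwards [hf.continuousAt.eventually (hg.eventually (by simp)), hf.eventually (by simp)]
      with y hgy hfy
    exact fderiv_comp y (hgy.differentiableAt (by simp)) (hfy.differentiableAt (by simp))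
  have hDg : HasFDerivAt (fun y => fderiv 𝕜 g (f y)) _ x :=
    (differentiableAt_fderiv_of_contDiffAt hg).hasFDerivAt.comp x
      (hf.differentiableAt (by simp)).hasFDerivAt
  have hDf := (differentiableAt_fderiv_of_contDiffAt hf).hasFDerivAt
  rw [hchain.fderiv_eq, (hDg.clm_comp hDf).fderiv]
  simp [add_comm]

lemma tendsto_clm_apply {ι : Type*} {l : Filter ι} {A : ι → E →L[𝕜] F} {A₀ : E →L[𝕜] F}
    {x : ι → E} {x₀ : E} (hA : Tendsto A l (𝓝 A₀)) (hx : Tendsto x l (𝓝 x₀)) :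
    Tendsto (fun j => A j (x j)) l (𝓝 (A₀ x₀)) :=
  (isBoundedBilinearMap_apply.continuous.tendsto (A₀, x₀)).comp (hA.prodMk_nhds hx)

variable {ι : Type*} {l : Filter ι} {g : F → G} {γ : ι → E → F} {γ₀ : E → F} {x : E}

lemma tendsto_fderiv_comp_apply (hg : ContDiffAt 𝕜 1 g (γ₀ x))
    (hγ : ∀ᶠ j in l, DifferentiableAt 𝕜 (γ j) x) (hγ₀ : DifferentiableAt 𝕜 γ₀ x)
    (h₀ : Tendsto (fun j => γ j x) l (𝓝 (γ₀ x))) {v : E}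
    (h₁ : Tendsto (fun j => fderiv 𝕜 (γ j) x v) l (𝓝 (fderiv 𝕜 γ₀ x v))) :
    Tendsto (fun j => fderiv 𝕜 (g ∘ γ j) x v) l (𝓝 (fderiv 𝕜 (g ∘ γ₀) x v)) := by
  have hDg : Tendsto (fun j => fderiv 𝕜 g (γ j x)) l (𝓝 (fderiv 𝕜 g (γ₀ x))) :=
    (hg.continuousAt_fderiv one_ne_zero).tendsto.comp h₀
  rw [fderiv_comp x (hg.differentiableAt one_ne_zero) hγ₀]
  refine (tendsto_clm_apply hDg h₁).congr' ?_
  filter_upwards [h₀.eventually (hg.eventually (by simp)), hγ] with j hgj hγj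
  rw [fderiv_comp x (hgj.differentiableAt one_ne_zero) hγj, ContinuousLinearMap.comp_apply]

lemma tendsto_fderiv_fderiv_comp_apply (hg : ContDiffAt 𝕜 2 g (γ₀ x))
    (hγ : ∀ᶠ j in l, ContDiffAt 𝕜 2 (γ j) x) (hγ₀ : ContDiffAt 𝕜 2 γ₀ x)
    (h₀ : Tendsto (fun j => γ j x) l (𝓝 (γ₀ x))) {v w : E}
    (hv : Tendsto (fun j => fderiv 𝕜 (γ j) x v) l (𝓝 (fderiv 𝕜 γ₀ x v)))
    (hw : Tendsto (fun j => fderiv 𝕜 (γ j) x w) l (𝓝 (fderiv 𝕜 γ₀ x w)))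
    (hvw : Tendsto (fun j => fderiv 𝕜 (fderiv 𝕜 (γ j)) x v w) l
      (𝓝 (fderiv 𝕜 (fderiv 𝕜 γ₀) x v w))) :
    Tendsto (fun j => fderiv 𝕜 (fderiv 𝕜 (g ∘ γ j)) x v w) l
      (𝓝 (fderiv 𝕜 (fderiv 𝕜 (g ∘ γ₀)) x v w)) := by
  have hDg : Tendsto (fun j => fderiv 𝕜 g (γ j x)) l (𝓝 (fderiv 𝕜 g (γ₀ x))) :=
    (hg.continuousAt_fderiv two_ne_zero).tendsto.comp h₀
  have hD2g : Tendsto (fun j => fderiv 𝕜 (fderiv 𝕜 g) (γ j x)) l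
      (𝓝 (fderiv 𝕜 (fderiv 𝕜 g) (γ₀ x))) :=
    ((hg.fderiv_right (m := 1) (by norm_num)).continuousAt_fderiv one_ne_zero).tendsto.comp h₀
  rw [fderiv_fderiv_comp_apply hg hγ₀]
  refine ((tendsto_clm_apply (tendsto_clm_apply hD2g hv) hw).add
    (tendsto_clm_apply hDg hvw)).congr' ?_
  filter_upwards [h₀.eventually (hg.eventually (by simp)), hγ] with j hgj hγj
  exact (fderiv_fderiv_comp_apply hgj hγj v w).symm

end SecondDerivative

section Holomorphic

variable {W : Type*} [NormedAddCommGroup W] [NormedSpace ℂ W]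

lemma fderiv_real_apply_eq_smul_deriv {g : ℂ → W} {z : ℂ} (hg : DifferentiableAt ℂ g z) (v : ℂ) :
    fderiv ℝ g z v = v • deriv g z := by
  rw [hg.fderiv_restrictScalars ℝ, ContinuousLinearMap.coe_restrictScalars',
    fderiv_eq_smul_deriv]

lemma fderiv_fderiv_real_apply_eq_smul_deriv [CompleteSpace W] {g : ℂ → W} {z : ℂ}
    (hg : AnalyticAt ℂ g z) (v w : ℂ) :
    fderiv ℝ (fderiv ℝ g) z v w = (v * w) • deriv (deriv g) z := by
  have hg2 : ContDiffAt ℝ 2 g z := hg.contDiffAt.restrict_scalars ℝ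
  have hfirst : (fun T => fderiv ℝ g T w) =ᶠ[𝓝 z] fun T => w • deriv g T := by
    filter_upwards [hg.eventually_analyticAt] with T hT
    exact fderiv_real_apply_eq_smul_deriv hT.differentiableAt w
  have hderiv : DifferentiableAt ℂ (deriv g) z := hg.deriv.differentiableAt
  calc fderiv ℝ (fderiv ℝ g) z v w
      = fderiv ℝ (fun T => fderiv ℝ g T w) z v := by
        rw [fderiv_clm_apply (differentiableAt_fderiv_of_contDiffAt hg2) (by fun_prop)]
        simp
    _ = (v * w) • deriv (deriv g) z := by
        rw [hfirst.fderiv_eq, fderiv_real_apply_eq_smul_deriv (hderiv.fun_const_smul w),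
          deriv_fun_const_smul w hderiv, smul_smul]

variable [CompleteSpace W] {ι : Type*} {l : Filter ι} {Ω : Set ℂ} {G : ι → ℂ → W} {g : ℂ → W}
  {z : ℂ}

lemma tendsto_fderiv_real_apply [l.NeBot] (hΩ : IsOpen Ω) (hz : z ∈ Ω)
    (hG : ∀ᶠ j in l, DifferentiableOn ℂ (G j) Ω) (hlim : TendstoLocallyUniformlyOn G g l Ω)
    (v : ℂ) : Tendsto (fun j => fderiv ℝ (G j) z v) l (𝓝 (fderiv ℝ g z v)) := by
  have hΩz : Ω ∈ 𝓝 z := hΩ.mem_nhds hz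
  rw [fderiv_real_apply_eq_smul_deriv ((hlim.differentiableOn hG hΩ).differentiableAt hΩz)]
  refine (((hlim.deriv hG hΩ).tendsto_at hz).const_smul v).congr' ?_
  filter_upwards [hG] with j hj
  exact (fderiv_real_apply_eq_smul_deriv (hj.differentiableAt hΩz) v).symm

lemma tendsto_fderiv_fderiv_real_apply [l.NeBot] (hΩ : IsOpen Ω) (hz : z ∈ Ω)
    (hG : ∀ᶠ j in l, DifferentiableOn ℂ (G j) Ω) (hlim : TendstoLocallyUniformlyOn G g l Ω)
    (v w : ℂ) :
    Tendsto (fun j => fderiv ℝ (fderiv ℝ (G j)) z v w) l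
      (𝓝 (fderiv ℝ (fderiv ℝ g) z v w)) := by
  have hΩz : Ω ∈ 𝓝 z := hΩ.mem_nhds hz
  have hlim₂ : TendstoLocallyUniformlyOn (deriv ∘ deriv ∘ G) (deriv (deriv g)) l Ω :=
    (hlim.deriv hG hΩ).deriv (hG.mono fun j hj => hj.deriv hΩ) hΩ
  rw [fderiv_fderiv_real_apply_eq_smul_deriv ((hlim.differentiableOn hG hΩ).analyticAt hΩz)]
  refine ((hlim₂.tendsto_at hz).const_smul (v * w)).congr' ?_
  filter_upwards [hG] with j hj
  exact (fderiv_fderiv_real_apply_eq_smul_deriv (hj.analyticAt hΩz) v w).symm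

end Holomorphic

section Curvature

variable {h : ℂ → ℝ} {z : ℂ}

lemma fderiv_ofReal_comp_apply (hh : DifferentiableAt ℝ h z) (v : ℂ) :
    fderiv ℝ (fun w => (h w : ℂ)) z v = (fderiv ℝ h z v : ℂ) :=
  DFunLike.congr_fun (ofRealCLM.hasFDerivAt.comp z hh.hasFDerivAt).fderiv v

lemma wdzR_eq_fderiv (hh : DifferentiableAt ℝ h z) :
    wdzR h z = (fderiv ℝ h z 1 - I * fderiv ℝ h z I) / 2 := by
  simp only [wdzR, wdz, fderiv_ofReal_comp_apply hh]

lemma wdzbarR_eq_fderiv (hh : DifferentiableAt ℝ h z) :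
    wdzbarR h z = (fderiv ℝ h z 1 + I * fderiv ℝ h z I) / 2 := by
  simp only [wdzbarR, wdzbar, fderiv_ofReal_comp_apply hh]

lemma wlapR_eq_fderiv_fderiv (hh : ContDiffAt ℝ 2 h z) :
    wlapR h z = (fderiv ℝ (fderiv ℝ h) z 1 1 + fderiv ℝ (fderiv ℝ h) z I I) / 4 := by
  have hbar : wdzbarR h =ᶠ[𝓝 z]
      fun w => ((fderiv ℝ h w 1 : ℂ) + I * (fderiv ℝ h w I : ℂ)) * (1 / 2) := by
    filter_upwards [hh.eventually (by simp)] with w hw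
    rw [wdzbarR_eq_fderiv (hw.differentiableAt (by simp))]
    ring
  have hD (v : ℂ) : HasFDerivAt (fun w => (fderiv ℝ h w v : ℂ)) _ z :=
    ofRealCLM.hasFDerivAt.comp z
      ((differentiableAt_fderiv_of_contDiffAt hh).hasFDerivAt.clm_apply (hasFDerivAt_const v z))
  have hsymm : fderiv ℝ (fderiv ℝ h) z 1 I = fderiv ℝ (fderiv ℝ h) z I 1 :=
    (hh.isSymmSndFDerivAt (by simp)) 1 I
  have hDbar := (((hD 1).add ((hD I).const_mul I)).mul_const (1 / 2)).congr_of_eventuallyEq hbar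
  rw [wlapR, wdz, hDbar.fderiv]
  simp only [one_div, ContinuousLinearMap.comp_zero, zero_add, smul_add, add_apply, smul_apply,
    ContinuousLinearMap.comp_apply, ContinuousLinearMap.flip_apply, ofRealCLM_apply, smul_eq_mul,
    hsymm]
  linear_combination (-(fderiv ℝ (fderiv ℝ h) z I I : ℂ) / 4) * I_sq

lemma gaussCurv_eq_fderiv (hh : ContDiffAt ℝ 2 h z) :
    gaussCurv h z =
      ((-(h z * (fderiv ℝ (fderiv ℝ h) z 1 1 + fderiv ℝ (fderiv ℝ h) z I I) -
        (fderiv ℝ h z 1 ^ 2 + fderiv ℝ h z I ^ 2)) / (2 * h z ^ 3) : ℝ) : ℂ) := by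
  have hh1 : DifferentiableAt ℝ h z := hh.differentiableAt (by simp)
  rw [gaussCurv, curvNum, wlapR_eq_fderiv_fderiv hh, wdzR_eq_fderiv hh1, wdzbarR_eq_fderiv hh1]
  push_cast
  linear_combination ((fderiv ℝ h z I : ℂ) ^ 2 / (-2 * (h z : ℂ) ^ 3)) * I_sq

lemma tendsto_gaussCurv {ι : Type*} {l : Filter ι} {H : ι → ℂ → ℝ}
    (hH : ∀ᶠ j in l, ContDiffAt ℝ 2 (H j) z) (hh : ContDiffAt ℝ 2 h z) (hne : h z ≠ 0)
    (h₀ : Tendsto (fun j => H j z) l (𝓝 (h z)))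
    (h₁ : ∀ v, Tendsto (fun j => fderiv ℝ (H j) z v) l (𝓝 (fderiv ℝ h z v)))
    (h₂ : ∀ v w, Tendsto (fun j => fderiv ℝ (fderiv ℝ (H j)) z v w) l
      (𝓝 (fderiv ℝ (fderiv ℝ h) z v w))) :
    Tendsto (fun j => gaussCurv (H j) z) l (𝓝 (gaussCurv h z)) := by
  have hcurv : (fun j => gaussCurv (H j) z) =ᶠ[l] _ := hH.mono fun j => gaussCurv_eq_fderiv
  rw [tendsto_congr' hcurv, gaussCurv_eq_fderiv hh]
  exact (continuous_ofReal.tendsto _).comp <|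
    ((h₀.mul ((h₂ 1 1).add (h₂ I I))).sub (((h₁ 1).pow 2).add ((h₁ I).pow 2))).neg.div
      ((h₀.pow 3).const_mul 2) (mul_ne_zero two_ne_zero (pow_ne_zero 3 hne))

end Curvature

theorem tendsto_gaussCurv_comp {W : Type*} [NormedAddCommGroup W] [NormedSpace ℂ W]
    [CompleteSpace W] {ι : Type*} {l : Filter ι} {Ω : Set ℂ} (hΩ : IsOpen Ω) {z : ℂ} (hz : z ∈ Ω)
    {G : ι → ℂ → W} {g : ℂ → W} (hG : ∀ᶠ j in l, DifferentiableOn ℂ (G j) Ω)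
    (hlim : TendstoLocallyUniformlyOn G g l Ω) {Φ : W → ℝ} (hΦ : ContDiffAt ℝ 2 Φ (g z))
    (hne : Φ (g z) ≠ 0) :
    Tendsto (fun j => gaussCurv (Φ ∘ G j) z) l (𝓝 (gaussCurv (Φ ∘ g) z)) := by
  obtain rfl | _ := l.eq_or_neBot
  · exact tendsto_bot
  have hC2 {γ : ℂ → W} (hγ : DifferentiableOn ℂ γ Ω) : ContDiffAt ℝ 2 γ z :=
    (hγ.analyticAt (hΩ.mem_nhds hz)).contDiffAt.restrict_scalars ℝ
  have hGC2 : ∀ᶠ j in l, ContDiffAt ℝ 2 (G j) z := hG.mono fun j => hC2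
  have hgC2 : ContDiffAt ℝ 2 g z := hC2 (hlim.differentiableOn hG hΩ)
  have h₀ : Tendsto (fun j => G j z) l (𝓝 (g z)) := hlim.tendsto_at hz
  have h₁ := tendsto_fderiv_real_apply hΩ hz hG hlim
  have h₂ := tendsto_fderiv_fderiv_real_apply hΩ hz hG hlim
  have hΦG : ∀ᶠ j in l, ContDiffAt ℝ 2 (Φ ∘ G j) z := by
    filter_upwards [h₀.eventually (hΦ.eventually (by simp)), hGC2] with j hΦj hGj
    exact hΦj.comp z hGj
  exact tendsto_gaussCurv hΦG (hΦ.comp z hgC2) hne (hΦ.continuousAt.tendsto.comp h₀)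
    (fun v => tendsto_fderiv_comp_apply (hΦ.of_le one_le_two)
      (hGC2.mono fun j hj => hj.differentiableAt two_ne_zero)
      (hgC2.differentiableAt two_ne_zero) h₀ (h₁ v))
    (fun v w => tendsto_fderiv_fderiv_comp_apply hΦ hGC2 hgC2 h₀ (h₁ v) (h₁ w) (h₂ v w))

lemma tendstoLocallyUniformlyOn_comp_of_forall_isCompact {α β γ ι : Type*} [TopologicalSpace α]
    [LocallyCompactSpace α] [TopologicalSpace β] [UniformSpace γ] {l : Filter ι} {Ω : Set α}
    {U : Set β} {f : ι → β → γ} {f₀ : β → γ} {Z : α → β}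
    (hf : ∀ K ⊆ U, IsCompact K → TendstoUniformlyOn f f₀ l K) (hΩ : IsOpen Ω)
    (hZ : ContinuousOn Z Ω) (hZU : Set.MapsTo Z Ω U) :
    TendstoLocallyUniformlyOn (fun j => f j ∘ Z) (f₀ ∘ Z) l Ω := by
  rw [tendstoLocallyUniformlyOn_iff_forall_isCompact hΩ]
  intro K hKΩ hK
  exact ((hf (Z '' K) (hZU.mono_left hKΩ).image_subset
    (hK.image_of_continuousOn (hZ.mono hKΩ))).comp Z).mono (Set.subset_preimage_image Z K)

/-- The Hermitian metric `(1 + |a|² u(|a|²)²) |da|² + ‖dz‖²` on `ℂ × E`, which does not depend on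
the base point in `E`. The triple `(a, b, w)` is the tangent vector `(b, w)` at a point over `a`. -/
noncomputable def graphNormSq {E : Type*} [NormedAddCommGroup E] (q : ℂ × ℂ × E) : ℝ :=
  (1 + ‖q.1‖ ^ 2 * u (‖q.1‖ ^ 2) ^ 2) * ‖q.2.1‖ ^ 2 + ‖q.2.2‖ ^ 2

lemma graphNormSq_pos {E : Type*} [NormedAddCommGroup E] {q : ℂ × ℂ × E} (hq : q.2.2 ≠ 0) :
    0 < graphNormSq q := by
  unfold graphNormSq
  positivity

lemma contDiffAt_graphNormSq {E : Type*} [NormedAddCommGroup E] [InnerProductSpace ℂ E]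
    {n : WithTop ℕ∞} {q : ℂ × ℂ × E} (hq : q.1 ≠ 0) : ContDiffAt ℝ n graphNormSq q := by
  have hsq : ContDiffAt ℝ n (fun q : ℂ × ℂ × E => ‖q.1‖ ^ 2) q := contDiffAt_fst.norm_sq ℝ
  have hu : ContDiffAt ℝ n (fun q : ℂ × ℂ × E => u (‖q.1‖ ^ 2)) q :=
    (analyticAt_u (by positivity)).contDiffAt.comp q hsq
  exact ((contDiffAt_const.add (hsq.mul (hu.pow 2))).mul (contDiffAt_snd.fst.norm_sq ℝ)).add
    (contDiffAt_snd.snd.norm_sq ℂ)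

section Leaf

variable {E : Type*} [NormedAddCommGroup E] [NormedSpace ℂ E]

/-- The lift of the curve `Z`, with velocity field `X`, to the graph of `f`, in the coordinates of
`graphNormSq`: the value `f (Z T)` followed by the velocity of `(f ∘ Z, Z)`. The metric `h_f` is
`graphNormSq ∘ graphLift f X Z`. -/
noncomputable def graphLift (f : E → ℂ) (X : E → E) (Z : ℂ → E) (T : ℂ) : ℂ × ℂ × E :=
  (f (Z T), fderiv ℂ f (Z T) (X (Z T)), X (Z T))

variable {U : Set E} {Ω : Set ℂ} {X : E → E} {Z : ℂ → E}

lemma graphLift_eqOn {f : E → ℂ} (hU : IsOpen U) (hf : DifferentiableOn ℂ f U) (hΩ : IsOpen Ω)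
    (hZ : DifferentiableOn ℂ Z Ω) (hZU : Set.MapsTo Z Ω U)
    (hZX : ∀ T ∈ Ω, deriv Z T = X (Z T)) :
    Set.EqOn (graphLift f X Z) (fun T => ((f ∘ Z) T, deriv (f ∘ Z) T, deriv Z T)) Ω := by
  intro T hT
  have hchain : deriv (f ∘ Z) T = fderiv ℂ f (Z T) (deriv Z T) :=
    fderiv_comp_deriv T (hf.differentiableAt (hU.mem_nhds (hZU hT)))
      (hZ.differentiableAt (hΩ.mem_nhds hT))
  simp only [graphLift, hchain, hZX T hT, Function.comp_apply]

lemma differentiableOn_graphLift [CompleteSpace E] {f : E → ℂ} (hU : IsOpen U)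
    (hf : DifferentiableOn ℂ f U) (hΩ : IsOpen Ω) (hZ : DifferentiableOn ℂ Z Ω)
    (hZU : Set.MapsTo Z Ω U) (hZX : ∀ T ∈ Ω, deriv Z T = X (Z T)) :
    DifferentiableOn ℂ (graphLift f X Z) Ω := by
  have hfZ : DifferentiableOn ℂ (f ∘ Z) Ω := hf.comp hZ hZU
  exact (hfZ.prodMk ((hfZ.deriv hΩ).prodMk (hZ.deriv hΩ))).congr
    (graphLift_eqOn hU hf hΩ hZ hZU hZX)

lemma tendstoLocallyUniformlyOn_graphLift {ι : Type*} {l : Filter ι} {f : ι → E → ℂ} {f₀ : E → ℂ}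
    (hU : IsOpen U) (hf : ∀ᶠ j in l, DifferentiableOn ℂ (f j) U) (hf₀ : DifferentiableOn ℂ f₀ U)
    (hconv : ∀ K ⊆ U, IsCompact K → TendstoUniformlyOn f f₀ l K) (hΩ : IsOpen Ω)
    (hZ : DifferentiableOn ℂ Z Ω) (hZU : Set.MapsTo Z Ω U)
    (hZX : ∀ T ∈ Ω, deriv Z T = X (Z T)) :
    TendstoLocallyUniformlyOn (fun j => graphLift (f j) X Z) (graphLift f₀ X Z) l Ω := by
  have hval : TendstoLocallyUniformlyOn (fun j => f j ∘ Z) (f₀ ∘ Z) l Ω :=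
    tendstoLocallyUniformlyOn_comp_of_forall_isCompact hconv hΩ hZ.continuousOn hZU
  have hder := hval.deriv (hf.mono fun j hj => hj.comp hZ hZU) hΩ
  have hZlim : TendstoLocallyUniformlyOn (fun _ => deriv Z) (deriv Z) l Ω :=
    fun s hs _ _ => ⟨Ω, self_mem_nhdsWithin, .of_forall fun _ _ _ => refl_mem_uniformity hs⟩
  refine ((hval.prodMk (hder.prodMk hZlim)).congr_inseparable ?_).congr_right
    (graphLift_eqOn hU hf₀ hΩ hZ hZU hZX).symm
  filter_upwards [hf] with j hj T hT
  exact .of_eq (graphLift_eqOn hU hj hΩ hZ hZU hZX hT).symm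

end Leaf

theorem stmt16_general {E : Type*} [NormedAddCommGroup E] [InnerProductSpace ℂ E]
    [CompleteSpace E] {ι : Type*} {l : Filter ι} {U : Set E} (hU : IsOpen U)
    {f : ι → E → ℂ} {f₀ : E → ℂ} (hf : ∀ᶠ j in l, DifferentiableOn ℂ (f j) U)
    (hf₀ : DifferentiableOn ℂ f₀ U)
    (hconv : ∀ K ⊆ U, IsCompact K → TendstoUniformlyOn f f₀ l K)
    {Ω : Set ℂ} (hΩ : IsOpen Ω) {Z : ℂ → E} (hZ : DifferentiableOn ℂ Z Ω)
    (hZU : Set.MapsTo Z Ω U) {X : E → E} (hZX : ∀ T ∈ Ω, deriv Z T = X (Z T))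
    {z : ℂ} (hz : z ∈ Ω) (hf₀z : f₀ (Z z) ≠ 0) (hXz : X (Z z) ≠ 0) :
    (∀ᶠ j in l, ∀ᶠ T in 𝓝 z, f j (Z T) ≠ 0) ∧
    Tendsto (fun j => gaussCurv (graphNormSq ∘ graphLift (f j) X Z) z) l
      (𝓝 (gaussCurv (graphNormSq ∘ graphLift f₀ X Z) z)) := by
  have hlim := tendstoLocallyUniformlyOn_graphLift hU hf hf₀ hconv hΩ hZ hZU hZX
  constructor
  · have hval : Tendsto (fun j => f j (Z z)) l (𝓝 (f₀ (Z z))) := (hlim.tendsto_at hz).fst_nhds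
    filter_upwards [hval.eventually_ne hf₀z, hf] with j hne hj
    exact ((hj.comp hZ hZU).differentiableAt (hΩ.mem_nhds hz)).continuousAt.eventually_ne hne
  · exact tendsto_gaussCurv_comp hΩ hz
      (hf.mono fun j hj => differentiableOn_graphLift hU hj hΩ hZ hZU hZX) hlim
      (contDiffAt_graphNormSq hf₀z) (graphNormSq_pos hXz).ne'

/-- if `f_j → f₀` locally uniformly on `U` and `Z` is a leaf through
`p ∉ f₀⁻¹(0)` of a nowhere-vanishing holomorphic vector field `X`, then `h_{f_j}` is
eventually defined near `T = 0` and the leafwise Gaussian curvatures at `T = 0`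
converge: `𝒦_{f_j}(0) → 𝒦_{f₀}(0)`. -/
theorem stmt16 (n : ℕ) (hn : 1 ≤ n)
    (U : Set (EuclideanSpace ℂ (Fin n))) (hU : IsOpen U)
    (f : ℕ → EuclideanSpace ℂ (Fin n) → ℂ) (f0 : EuclideanSpace ℂ (Fin n) → ℂ)
    (hfj : ∀ j, DifferentiableOn ℂ (f j) U) (hf0 : DifferentiableOn ℂ f0 U)
    (hconv : ∀ K ⊆ U, IsCompact K → TendstoUniformlyOn f f0 atTop K)
    (p : EuclideanSpace ℂ (Fin n)) (hp : p ∈ U) (hf0p : f0 p ≠ 0)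
    (V : Set (EuclideanSpace ℂ (Fin n))) (hV : IsOpen V) (hpV : p ∈ V) (hVU : V ⊆ U)
    (X : EuclideanSpace ℂ (Fin n) → EuclideanSpace ℂ (Fin n))
    (hX : DifferentiableOn ℂ X V) (hXne : ∀ q ∈ V, X q ≠ 0)
    (ε : ℝ) (hε : 0 < ε)
    (Z : ℂ → EuclideanSpace ℂ (Fin n))
    (hZ : DifferentiableOn ℂ Z (Metric.ball 0 ε))
    (hZ0 : Z 0 = p)
    (hZU : ∀ T ∈ Metric.ball (0 : ℂ) ε, Z T ∈ U)
    (hZV : ∀ T ∈ Metric.ball (0 : ℂ) ε, Z T ∈ V)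
    (hZ' : ∀ T ∈ Metric.ball (0 : ℂ) ε, deriv Z T = X (Z T))
    (hf0Z : ∀ T ∈ Metric.ball (0 : ℂ) ε, f0 (Z T) ≠ 0) :
    (∃ N : ℕ, ∀ j ≥ N, ∀ᶠ T in 𝓝 (0 : ℂ), f j (Z T) ≠ 0) ∧
    Tendsto (fun j =>
        gaussCurv (fun T =>
          (1 + ‖f j (Z T)‖ ^ 2 * u (‖f j (Z T)‖ ^ 2) ^ 2) *
            ‖fderiv ℂ (f j) (Z T) (X (Z T))‖ ^ 2 + ‖X (Z T)‖ ^ 2) 0)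
      atTop
      (𝓝 (gaussCurv (fun T =>
          (1 + ‖f0 (Z T)‖ ^ 2 * u (‖f0 (Z T)‖ ^ 2) ^ 2) *
            ‖fderiv ℂ f0 (Z T) (X (Z T))‖ ^ 2 + ‖X (Z T)‖ ^ 2) 0)) := by
  obtain ⟨hne, hlim⟩ := stmt16_general hU (.of_forall hfj) hf0 hconv Metric.isOpen_ball hZ hZU hZ'
    (Metric.mem_ball_self hε) (by rwa [hZ0]) (by simpa only [hZ0] using hXne p hpV)
  exact ⟨eventually_atTop.1 hne, hlim⟩
end
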